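/- Let S be a special schema, let u, v be variables and let p, q be predicate symbols of S. Suppose that there exists a qu-couple for S, that there is an assignment to v in the body of p (if p is a while predicate) or in the true or false part of p (if p is an if predicate), and that there is a path-segment of S that v-feeds p to q. Then there exists a pu-couple for S. -/

import Mathlib

/-!
Common formalization of program schemas (Danicic–Hierons–Laurence):
letters/paths, Herbrand semantics, freeness, liberality, subschemas,
data/control dependence, Weiser's set `Need`, slices and couples.
Function symbols, predicate symbols, variables and labels are all
modelled by `ℕ` (function and predicate symbols kept disjoint by
construction of the syntax).
-/

namespace SchemaSlicing

/-- Letters of the alphabet Λ(S): assignment letters `y := f^(l)(args)` and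
predicate letters `⟨p^(l)(args), b⟩`. -/
inductive Letter : Type
  | asn (y : ℕ) (f : ℕ) (l : ℕ) (args : List ℕ)
  | prd (p : ℕ) (l : ℕ) (args : List ℕ) (b : Bool)
  deriving DecidableEq

/-- Program schemas. -/
inductive Schema : Type
  | skip
  | assign (y : ℕ) (f : ℕ) (l : ℕ) (args : List ℕ)
  | seq (S₁ S₂ : Schema)
  | ite (p : ℕ) (l : ℕ) (args : List ℕ) (Tt Tf : Schema)
  | whil (p : ℕ) (l : ℕ) (args : List ℕ) (body : Schema)

/-- Complete paths of a while loop iterated `n` times. -/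
def whileIter (p l : ℕ) (args : List ℕ) (B : Set (List Letter)) : ℕ → Set (List Letter)
  | 0 => {[Letter.prd p l args false]}
  | n + 1 => {σ | ∃ x ∈ B, ∃ y ∈ whileIter p l args B n, σ = Letter.prd p l args true :: (x ++ y)}

/-- The set Π(S) of complete paths through a schema. -/
def Paths : Schema → Set (List Letter)
  | .skip => {[]}
  | .assign y f l args => {[Letter.asn y f l args]}
  | .seq S₁ S₂ => {σ | ∃ x ∈ Paths S₁, ∃ y ∈ Paths S₂, σ = x ++ y}
  | .ite p l args Tt Tf =>
      {σ | (∃ x ∈ Paths Tt, σ = Letter.prd p l args true :: x) ∨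
           (∃ x ∈ Paths Tf, σ = Letter.prd p l args false :: x)}
  | .whil p l args body => {σ | ∃ n, σ ∈ whileIter p l args (Paths body) n}

/-- pre(Π(S)): finite prefixes of complete paths. -/
def PrePaths (S : Schema) : Set (List Letter) := {σ | ∃ τ, σ <+: τ ∧ τ ∈ Paths S}

/-- μ is a path-segment of S. -/
def PathSegment (S : Schema) (μ : List Letter) : Prop := ∃ a b, a ++ μ ++ b ∈ Paths S

/-- μ is a terminal path-segment of S. -/
def TerminalSegment (S : Schema) (μ : List Letter) : Prop := ∃ a, a ++ μ ∈ Paths S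

/-- An interpretation over a domain `D`. -/
structure Interp (D : Type) where
  fn : ℕ → List D → D
  pr : ℕ → List D → Bool

/-- One execution step on states. -/
def stepL {D : Type} (I : Interp D) (d : ℕ → D) : Letter → (ℕ → D)
  | .asn y f _ args => Function.update d y (I.fn f (args.map d))
  | .prd _ _ _ _ => d

/-- `M[σ]^I_d`: the state after executing the assignment letters of σ from d. -/
def execP {D : Type} (I : Interp D) (d : ℕ → D) (σ : List Letter) : ℕ → D :=
  σ.foldl (stepL I) d

/-- σ is consistent with the interpretation `I` from initial state `d`:
every predicate letter along σ is evaluated according to `I`. -/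
def Agrees {D : Type} (I : Interp D) (d : ℕ → D) (σ : List Letter) : Prop :=
  ∀ τ p l args b, τ ++ [Letter.prd p l args b] <+: σ →
    I.pr p (args.map (execP I d τ)) = b

/-- σ is the (terminating) path `π_S(I,d)`. -/
def TermRun {D : Type} (S : Schema) (I : Interp D) (d : ℕ → D) (σ : List Letter) : Prop :=
  σ ∈ Paths S ∧ Agrees I d σ

/-- `M[S]^I_d ≠ ⊥`. -/
def Terminates {D : Type} (S : Schema) (I : Interp D) (d : ℕ → D) : Prop :=
  ∃ σ, TermRun S I d σ

/-- Terms over function symbols and variables (the Herbrand domain). -/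
inductive Trm : Type
  | var : ℕ → Trm
  | app : ℕ → List Trm → Trm

/-- A Herbrand interpretation is determined by its predicate part. -/
abbrev HInterp := ℕ → List Trm → Bool

/-- The Herbrand interpretation with predicate part `h`. -/
def herb (h : HInterp) : Interp Trm := ⟨Trm.app, h⟩

/-- The natural state `e`. -/
def eSt : ℕ → Trm := Trm.var

/-- `M[σ]_e`: Herbrand execution of the assignment letters of σ from e. -/
def hexec (σ : List Letter) : ℕ → Trm := execP (herb fun _ _ => false) eSt σ

/-- σ is consistent with the Herbrand interpretation `i` from `e`. -/
def hAgrees (i : HInterp) (σ : List Letter) : Prop := Agrees (herb i) eSt σ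

/-- A schema is free if every prefix of a complete path is a prefix of
`π_S(i,e)` for some Herbrand interpretation i. -/
def Free (S : Schema) : Prop := ∀ σ ∈ PrePaths S, ∃ i : HInterp, hAgrees i σ

/-- A schema is liberal if along any executable path (from `e`, under a
Herbrand interpretation) no two assignments produce the same term. -/
def Liberal (S : Schema) : Prop :=
  ∀ (i : HInterp) (μ ν : List Letter) (y f l args w g m brgs),
    (μ ++ Letter.asn y f l args :: (ν ++ [Letter.asn w g m brgs])) ∈ PrePaths S →
    hAgrees i (μ ++ Letter.asn y f l args :: (ν ++ [Letter.asn w g m brgs])) →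
    hexec (μ ++ [Letter.asn y f l args]) y ≠
      hexec (μ ++ Letter.asn y f l args :: (ν ++ [Letter.asn w g m brgs])) w

/-- Labelled symbols: labelled function symbols and labelled predicate symbols. -/
inductive LSym : Type
  | fn (f l : ℕ)
  | pr (p l : ℕ)
  deriving DecidableEq

/-- The set of labelled symbols occurring in a schema. -/
def lsymSet : Schema → Set LSym
  | .skip => ∅
  | .assign _ f l _ => {LSym.fn f l}
  | .seq a b => lsymSet a ∪ lsymSet b
  | .ite p l _ t e => insert (LSym.pr p l) (lsymSet t ∪ lsymSet e)
  | .whil p l _ b => insert (LSym.pr p l) (lsymSet b)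

/-- Number of occurrences of a labelled symbol in a schema. -/
def lsymCount : Schema → LSym → ℕ
  | .skip, _ => 0
  | .assign _ f l _, x => if x = LSym.fn f l then 1 else 0
  | .seq a b, x => lsymCount a x + lsymCount b x
  | .ite p l _ t e, x => (if x = LSym.pr p l then 1 else 0) + lsymCount t x + lsymCount e x
  | .whil p l _ b, x => (if x = LSym.pr p l then 1 else 0) + lsymCount b x

/-- Standing convention: distinct occurrences of the same symbol carry distinct labels. -/
def WellLabelled (S : Schema) : Prop := ∀ x, lsymCount S x ≤ 1

/-- Number of occurrences of a predicate symbol in a schema. -/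
def predCount : Schema → ℕ → ℕ
  | .skip, _ => 0
  | .assign _ _ _ _, _ => 0
  | .seq a b, p => predCount a p + predCount b p
  | .ite q _ _ t e, p => (if q = p then 1 else 0) + predCount t p + predCount e p
  | .whil q _ _ b, p => (if q = p then 1 else 0) + predCount b p

/-- No predicate symbol occurs more than once. -/
def PredLinear (S : Schema) : Prop := ∀ p, predCount S p ≤ 1

/-- `Occurs T S`: T occurs as a subtree (statement) of S. -/
inductive Occurs : Schema → Schema → Prop
  | refl (S : Schema) : Occurs S S
  | seqL {S T U : Schema} : Occurs S T → Occurs S (.seq T U)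
  | seqR {S T U : Schema} : Occurs S U → Occurs S (.seq T U)
  | iteT {S t e : Schema} {p l args} : Occurs S t → Occurs S (.ite p l args t e)
  | iteF {S t e : Schema} {p l args} : Occurs S e → Occurs S (.ite p l args t e)
  | whilB {S b : Schema} {p l args} : Occurs S b → Occurs S (.whil p l args b)

/-- The schema contains an assignment to the variable v. -/
def AssignsTo : Schema → ℕ → Prop
  | .skip, _ => False
  | .assign y _ _ _, v => y = v
  | .seq a b, v => AssignsTo a v ∨ AssignsTo b v
  | .ite _ _ _ t e, v => AssignsTo t v ∨ AssignsTo e v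
  | .whil _ _ _ b, v => AssignsTo b v

/-- The schema contains an assignment `v := f(...)`. -/
def AssignsWith : Schema → ℕ → ℕ → Prop
  | .skip, _, _ => False
  | .assign y g _ _, f, v => g = f ∧ y = v
  | .seq a b, f, v => AssignsWith a f v ∨ AssignsWith b f v
  | .ite _ _ _ t e, f, v => AssignsWith t f v ∨ AssignsWith e f v
  | .whil _ _ _ b, f, v => AssignsWith b f v

/-- If a function symbol occurs in assignments in both parts of an if
predicate, then those assignments assign to distinct variables. -/
def IfPartsCondition (S : Schema) : Prop :=
  ∀ p l args t e, Occurs (Schema.ite p l args t e) S →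
    ∀ f v, AssignsWith t f v → AssignsWith e f v → False

/-- Special schemas: (well-labelled,) predicate-linear, free, liberal,
satisfying the condition on the two parts of each if predicate. -/
def Special (S : Schema) : Prop :=
  WellLabelled S ∧ PredLinear S ∧ Free S ∧ Liberal S ∧ IfPartsCondition S

/-- `Subschema T S`: T is obtained from S by deleting statements. -/
inductive Subschema : Schema → Schema → Prop
  | skip (S : Schema) : Subschema .skip S
  | refl (S : Schema) : Subschema S S
  | seqL (S₁ S₂ : Schema) : Subschema S₁ (.seq S₁ S₂)
  | seqR (S₁ S₂ : Schema) : Subschema S₂ (.seq S₁ S₂)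
  | seqCongrL {S' S : Schema} (T : Schema) :
      Subschema S' S → Subschema (.seq S' T) (.seq S T)
  | seqCongrR {T' T : Schema} (S : Schema) :
      Subschema T' T → Subschema (.seq S T') (.seq S T)
  | whilCongr {T' T : Schema} (p l : ℕ) (args : List ℕ) :
      Subschema T' T → Subschema (.whil p l args T') (.whil p l args T)
  | iteCongrT {T' T : Schema} (p l : ℕ) (args : List ℕ) (E : Schema) :
      Subschema T' T → Subschema (.ite p l args T' E) (.ite p l args T E)
  | iteCongrF {E' E : Schema} (p l : ℕ) (args : List ℕ) (T : Schema) :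
      Subschema E' E → Subschema (.ite p l args T E') (.ite p l args T E)
  | trans {A B C : Schema} : Subschema A B → Subschema B C → Subschema A C

/-- T is a u-slice of S (u a variable): over every domain, state and
interpretation, if S terminates then T terminates with the same final value of u. -/
def IsUSlice (S T : Schema) (u : ℕ) : Prop :=
  ∀ (D : Type) (I : Interp D) (d : ℕ → D),
    Terminates S I d →
      Terminates T I d ∧
      ∀ σ τ, TermRun S I d σ → TermRun T I d τ → execP I d σ u = execP I d τ u

/-- T is an ω-slice of S: S and T have the same termination behaviour. -/
def IsOmegaSlice (S T : Schema) : Prop :=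
  ∀ (D : Type) (I : Interp D) (d : ℕ → D), Terminates S I d ↔ Terminates T I d

/-- `IsFTrm F t`: t is an F-term, for a (nonempty) word F of function symbols. -/
inductive IsFTrm : List ℕ → Trm → Prop
  | base (f : ℕ) (ts : List Trm) : IsFTrm [f] (.app f ts)
  | step {F : List ℕ} {t : Trm} (g : ℕ) {ts : List Trm} :
      t ∈ ts → IsFTrm F t → IsFTrm (F ++ [g]) (.app g ts)

/-- `IsVFTrm v F t`: t is a vF-term. -/
inductive IsVFTrm (v : ℕ) : List ℕ → Trm → Prop
  | base : IsVFTrm v [] (.var v)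
  | step {F : List ℕ} {t : Trm} (g : ℕ) {ts : List Trm} :
      t ∈ ts → IsVFTrm v F t → IsVFTrm v (F ++ [g]) (.app g ts)

/-- The function symbol f occurs in the term t. -/
inductive OccIn (f : ℕ) : Trm → Prop
  | here (ts : List Trm) : OccIn f (.app f ts)
  | there {g : ℕ} {ts : List Trm} {t : Trm} : t ∈ ts → OccIn f t → OccIn f (.app g ts)

/-- Labelled terms: applications additionally record the label of the
assignment that created them. -/
inductive LTrm : Type
  | var : ℕ → LTrm
  | app : ℕ → ℕ → List LTrm → LTrm

def lStep (d : ℕ → LTrm) : Letter → (ℕ → LTrm)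
  | .asn y f l args => Function.update d y (LTrm.app f l (args.map d))
  | .prd _ _ _ _ => d

/-- Labelled Herbrand execution from e. -/
def lexec (σ : List Letter) : ℕ → LTrm := σ.foldl lStep LTrm.var

/-- F-terms for words F of labelled function symbols. -/
inductive IsFLTrm : List (ℕ × ℕ) → LTrm → Prop
  | base (f l : ℕ) (ts : List LTrm) : IsFLTrm [(f, l)] (.app f l ts)
  | step {F : List (ℕ × ℕ)} {t : LTrm} (g m : ℕ) {ts : List LTrm} :
      t ∈ ts → IsFLTrm F t → IsFLTrm (F ++ [(g, m)]) (.app g m ts)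

/-- `f^(l) ⤳ u` for a variable u. -/
def DepFV (S : Schema) (fl : ℕ × ℕ) (u : ℕ) : Prop :=
  ∃ σ, TerminalSegment S σ ∧ IsFLTrm [fl] (lexec σ u)

/-- `f^(l) ⤳ g^(m)` for labelled function symbols. -/
def DepFF (S : Schema) (fl gm : ℕ × ℕ) : Prop :=
  ∃ σ, PathSegment S σ ∧ ∃ w, IsFLTrm [fl, gm] (lexec σ w)

/-- `f^(l) ⤳ q^(m)` for a labelled predicate. -/
def DepFP (S : Schema) (fl : ℕ × ℕ) (q m : ℕ) : Prop :=
  ∃ σ args Z, PathSegment S (σ ++ [Letter.prd q m args Z]) ∧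
    ∃ w ∈ args, IsFLTrm [fl] (lexec σ w)

/-- `f^(l) ⤳ x` for a labelled symbol x. -/
def DepFX (S : Schema) (fl : ℕ × ℕ) : LSym → Prop
  | .fn g m => DepFF S fl (g, m)
  | .pr q m => DepFP S fl q m

/-- The labelled predicate `p^(l)` controls the labelled symbol x in S. -/
def ControlsL (S : Schema) (p l : ℕ) (x : LSym) : Prop :=
  (∃ args t e, Occurs (Schema.ite p l args t e) S ∧ (x ∈ lsymSet t ∨ x ∈ lsymSet e)) ∨
  (∃ args b, Occurs (Schema.whil p l args b) S ∧ x ∈ lsymSet b)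

/-- `p^(l)` is a while predicate of S. -/
def IsWhilePred (S : Schema) (p l : ℕ) : Prop :=
  ∃ args b, Occurs (Schema.whil p l args b) S

/-- Slicing criteria: a variable, or termination (ω). -/
inductive Crit : Type
  | var : ℕ → Crit
  | omega

/-- Weiser's labelled symbol set `Need_S(u)`. -/
inductive Need (S : Schema) : Crit → LSym → Prop
  | ofVar {v f l : ℕ} : DepFV S (f, l) v → Need S (.var v) (.fn f l)
  | ofOmega {p l : ℕ} : IsWhilePred S p l → Need S .omega (.pr p l)
  | ofDep {u : Crit} {f l : ℕ} {x : LSym} :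
      Need S u x → DepFX S (f, l) x → Need S u (.fn f l)
  | ofControl {u : Crit} {p l : ℕ} {x : LSym} :
      Need S u x → ControlsL S p l x → Need S u (.pr p l)

/-- `{i,j}` is a p(ts)-couple: i and j differ at the predicate term p(ts)
and agree on every other predicate term. -/
def PTCouple (p : ℕ) (ts : List Trm) (i j : HInterp) : Prop :=
  i p ts ≠ j p ts ∧ ∀ q ss, (q, ss) ≠ (p, ts) → i q ss = j q ss

/-- `{i,j}` is a p(ts)u-couple for S. -/
def PTUCouple (S : Schema) (p : ℕ) (ts : List Trm) (u : ℕ) (i j : HInterp) : Prop :=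
  PTCouple p ts i j ∧
  ∃ σ τ, TermRun S (herb i) eSt σ ∧ TermRun S (herb j) eSt τ ∧ hexec σ u ≠ hexec τ u

/-- `{i,j}` is a pu-couple for S. -/
def PUCouple (S : Schema) (p u : ℕ) (i j : HInterp) : Prop :=
  ∃ ts, PTUCouple S p ts u i j

/-- `{i,j}` is a pω-couple for S: a p-couple such that exactly one of the
two runs terminates. -/
def POmegaCouple (S : Schema) (p : ℕ) (i j : HInterp) : Prop :=
  ∃ ts, PTCouple p ts i j ∧
    Xor' (Terminates S (herb i) eSt) (Terminates S (herb j) eSt)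

/-- A `p^(l)u`-couple for S presented with its divergence data: the common
prefix `head` (the head of the couple), the argument vector of `p^(l)` at the
divergence point, and the two tails. -/
def LPUCoupleData (S : Schema) (p l u : ℕ) (i j : HInterp)
    (head : List Letter) (args : List ℕ) (ρt ρf : List Letter) : Prop :=
  PTCouple p (args.map (hexec head)) i j ∧
  TermRun S (herb i) eSt (head ++ Letter.prd p l args true :: ρt) ∧
  TermRun S (herb j) eSt (head ++ Letter.prd p l args false :: ρf) ∧
  hexec (head ++ Letter.prd p l args true :: ρt) u ≠
    hexec (head ++ Letter.prd p l args false :: ρf) u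

/-- A (p,X)-link in S. -/
def PLink (S : Schema) (p : ℕ) (X : Bool) (ν : List Letter) : Prop :=
  (∃ l args t e, Occurs (Schema.ite p l args t e) S ∧
     ∃ π ∈ Paths (if X then t else e), ν = Letter.prd p l args X :: π) ∨
  (∃ l args b, Occurs (Schema.whil p l args b) S ∧
     ((X = false ∧ ν = [Letter.prd p l args false]) ∨
      (X = true ∧ ∃ π ∈ Paths b, ∃ ρ ∈ Paths (Schema.whil p l args b),
        ν = Letter.prd p l args true :: (π ++ ρ))))

/-- The path-segment μ v-feeds p to q in S. -/
def VFeeds (S : Schema) (v p q : ℕ) (μ : List Letter) : Prop :=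
  ∃ X ν, PLink S p X ν ∧ ∃ m args, PathSegment S (ν ++ μ ++ [Letter.prd q m args true]) ∧
    ∃ w ∈ args, ∃ F, IsVFTrm v F (hexec μ w)

/-- There is an assignment to v in the body (while) or in the true or
false part (if) of the predicate p in S. -/
def AssignInPart (S : Schema) (p v : ℕ) : Prop :=
  (∃ l args t e, Occurs (Schema.ite p l args t e) S ∧ (AssignsTo t v ∨ AssignsTo e v)) ∨
  (∃ l args b, Occurs (Schema.whil p l args b) S ∧ AssignsTo b v)

/-- The (unlabelled) symbol of a letter (function symbols and predicate
symbols kept disjoint via a sum). -/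
def symOf : Letter → Sum ℕ ℕ
  | .asn _ f _ _ => .inl f
  | .prd p _ _ _ => .inr p

/-- The labelled symbol of a letter. -/
def lsymOf : Letter → LSym
  | .asn _ f l _ => .fn f l
  | .prd p l _ _ => .pr p l

/-- The vector of variables referenced by a letter. -/
def refsOf : Letter → List ℕ
  | .asn _ _ _ args => args
  | .prd _ _ args _ => args

/-- Statements of predicate-free schemas. -/
inductive PFStmt : Type
  | skip
  | asn (y : ℕ) (f : ℕ) (args : List ℕ)
  deriving DecidableEq

/-- A predicate-free schema is a finite sequence of skips and assignments. -/
abbrev PFS := List PFStmt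

def pfStep (d : ℕ → Trm) : PFStmt → (ℕ → Trm)
  | .skip => d
  | .asn y f args => Function.update d y (Trm.app f (args.map d))

/-- Execution of a predicate-free schema from a state d. -/
def pfExecFrom (d : ℕ → Trm) (U : PFS) : ℕ → Trm := U.foldl pfStep d

/-- `M[U]_e` for a predicate-free schema. -/
def pfExec (U : PFS) : ℕ → Trm := pfExecFrom eSt U

/-- A predicate-free schema is liberal: executed from e, no two of its
assignments produce equal term values. -/
def PFLiberal (U : PFS) : Prop :=
  ∀ A y f args B w g brgs C,
    U = A ++ PFStmt.asn y f args :: (B ++ PFStmt.asn w g brgs :: C) →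
    pfExec (A ++ [PFStmt.asn y f args]) y ≠
      pfExec (A ++ PFStmt.asn y f args :: (B ++ [PFStmt.asn w g brgs])) w

end SchemaSlicing

/-!
Suppose that no `pu`-couple exists, so that the predicate `p` cannot influence the final value of
`u` (`NP S u p`). Let `T0` be the if- or while-statement of `p`.

* Changing an interpretation at predicates which cannot influence `u` leaves the final
  value of `u` unchanged (`outv_congr`); moreover no predicate occurring in `T0` can influence `u`
  (`np_of_stmt`). Freeness enters through the fact that no predicate term is evaluated twice along a
  path (`read_once`); it also makes every run under an interpretation with finitely many true
  predicate terms terminate (`exists_run`), and couples can always be cut down to such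
  interpretations (`restrict_couple`).
* Call a predicate fed (`UP`) if it can influence `u` and some path through `T0`, followed by a
  segment `μ`, leads to it so that its arguments depend on a variable assigned in `T0`, all earlier
  letters on `μ` of this kind being false. Taking the first candidate on the given segment from `p`
  to `q` shows that a fed predicate exists (`exists_UP`).
* Starting with a couple for a fed predicate, true terms of fed predicates not evaluated before the
  divergence are made false one at a time, which ends with a couple for a fed predicate such that
  both tails after the divergence make all fed predicates false (`descent`).
* By freeness and liberality, whether two terms computed after a common head coincide does not
  depend on that head (`coincide`). Hence the tails of a couple may be moved to any other path
  leading to the same predicate (`FamAt.transport`), in particular to one through `T0`.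
* The condition on the parts of if predicates and liberality give two paths `ν₁`, `ν₂` through `T0`
  leaving different terms in a given variable assigned in `T0` (`distinguish`), and therefore
  different predicate terms of the fed predicate `q`. Put the couple behind `ν₁` and replace `ν₁` by
  `ν₂`. As only predicates without influence on `u` are evaluated inside `T0`, and all terms altered
  by the replacement belong to fed predicates and are false in either case, the pair of
  interpretations is still a couple. Its predicate term is no longer evaluated at the old position,
  so it is evaluated strictly later, inside the tail. The couple obtained has the same properties
  and a shorter tail, which is impossible by induction (`final_step`).
-/

namespace SchemaSlicing

/-! ### Herbrand execution -/

/-- Herbrand execution of the assignment letters of `σ` from an arbitrary state `d`. -/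
def hx (d : ℕ → Trm) (σ : List Letter) : ℕ → Trm := execP (herb fun _ _ => false) d σ

theorem hexec_eq_hx (σ : List Letter) : hexec σ = hx eSt σ := rfl

@[simp] theorem hx_nil (d : ℕ → Trm) : hx d [] = d := rfl

@[simp] theorem hx_asn_cons (d : ℕ → Trm) (y f l args σ) :
    hx d (Letter.asn y f l args :: σ) =
      hx (Function.update d y (Trm.app f (args.map d))) σ := rfl

@[simp] theorem hx_prd_cons (d : ℕ → Trm) (p l args b σ) :
    hx d (Letter.prd p l args b :: σ) = hx d σ := rfl

theorem hx_append (d : ℕ → Trm) (σ τ : List Letter) : hx d (σ ++ τ) = hx (hx d σ) τ := by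
  simp [hx, execP, List.foldl_append]

theorem execP_herb (i : HInterp) (d : ℕ → Trm) (σ : List Letter) :
    execP (herb i) d σ = hx d σ := by
  induction σ generalizing d with
  | nil => rfl
  | cons L σ ih => cases L <;> exact ih _

/-- A predicate term: a predicate symbol with a vector of Herbrand terms. -/
abbrev Bit := ℕ × List Trm

/-- The value of a Herbrand interpretation at a predicate term. -/
def val (i : HInterp) (x : Bit) : Bool := i x.1 x.2

/-- `Rd d σ x a b`: executing `σ` from the state `d`, the predicate letter following the prefix
`a` of `σ` evaluates the predicate term `x` and carries the truth value `b`. -/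
def Rd (d : ℕ → Trm) (σ : List Letter) (x : Bit) (a : List Letter) (b : Bool) : Prop :=
  ∃ l args ρ, σ = a ++ Letter.prd x.1 l args b :: ρ ∧ x.2 = args.map (hx d a)

theorem rd_intro (d : ℕ → Trm) (a : List Letter) (r l : ℕ) (args b ρ) :
    Rd d (a ++ Letter.prd r l args b :: ρ) (r, args.map (hx d a)) a b :=
  ⟨l, args, ρ, rfl, rfl⟩

theorem hAgrees_iff (i : HInterp) (σ : List Letter) :
    hAgrees i σ ↔ ∀ x a b, Rd eSt σ x a b → val i x = b := by
  constructor
  · rintro h ⟨r, ts⟩ a b ⟨l, args, ρ, rfl, hts⟩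
    have := h a r l args b ⟨ρ, by simp⟩
    rw [execP_herb] at this
    dsimp at hts
    subst hts
    exact this
  · rintro h a r l args b ⟨ρ, rfl⟩
    rw [execP_herb]
    exact h (r, args.map (hx eSt a)) a b ⟨l, args, ρ, by simp, rfl⟩

theorem rd_append_left {d : ℕ → Trm} {σ : List Letter} {x a b} (h : Rd d σ x a b)
    (τ : List Letter) : Rd d (σ ++ τ) x a b := by
  obtain ⟨l, args, ρ, rfl, hx⟩ := h
  exact ⟨l, args, ρ ++ τ, by simp, hx⟩

theorem rd_append_right {d : ℕ → Trm} {σ τ : List Letter} {x c b} (h : Rd (hx d σ) τ x c b) :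
    Rd d (σ ++ τ) x (σ ++ c) b := by
  obtain ⟨l, args, ρ, rfl, hx⟩ := h
  exact ⟨l, args, ρ, by simp, by rw [hx_append]; exact hx⟩

theorem rd_append {d : ℕ → Trm} {σ τ : List Letter} {x a b} (h : Rd d (σ ++ τ) x a b) :
    Rd d σ x a b ∨ ∃ c, a = σ ++ c ∧ Rd (hx d σ) τ x c b := by
  obtain ⟨l, args, ρ, he, hx⟩ := h
  rcases List.append_eq_append_iff.1 he with ⟨c, rfl, h2⟩ | ⟨c, rfl, h2⟩
  · exact Or.inr ⟨c, rfl, l, args, ρ, h2, by rw [hx, hx_append]⟩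
  · cases c with
    | nil =>
      refine Or.inr ⟨[], by simp, l, args, ρ, by simpa using h2.symm, by simpa using hx⟩
    | cons L c =>
      simp only [List.cons_append, List.cons.injEq] at h2
      obtain ⟨rfl, h2⟩ := h2
      exact Or.inl ⟨l, args, c, rfl, hx⟩

theorem rd_prd_cons {d : ℕ → Trm} {r l args b' τ x a b}
    (h : Rd d (Letter.prd r l args b' :: τ) x a b) :
    (a = [] ∧ x = (r, args.map d) ∧ b = b') ∨
      ∃ c, a = Letter.prd r l args b' :: c ∧ Rd d τ x c b := by
  obtain ⟨l2, args2, ρ, he, hx⟩ := h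
  cases a with
  | nil =>
    simp only [List.nil_append, List.cons.injEq, Letter.prd.injEq] at he
    obtain ⟨⟨h1, rfl, rfl, rfl⟩, rfl⟩ := he
    exact Or.inl ⟨rfl, Prod.ext h1.symm hx, rfl⟩
  | cons L c =>
    simp only [List.cons_append, List.cons.injEq] at he
    obtain ⟨rfl, rfl⟩ := he
    exact Or.inr ⟨c, rfl, l2, args2, ρ, rfl, hx⟩

theorem rd_asn_cons {d : ℕ → Trm} {y f l args τ x a b}
    (h : Rd d (Letter.asn y f l args :: τ) x a b) :
    ∃ c, a = Letter.asn y f l args :: c ∧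
      Rd (Function.update d y (Trm.app f (args.map d))) τ x c b := by
  obtain ⟨l2, args2, ρ, he, hx⟩ := h
  cases a with
  | nil => simp at he
  | cons L c =>
    simp only [List.cons_append, List.cons.injEq] at he
    obtain ⟨rfl, rfl⟩ := he
    exact ⟨c, rfl, l2, args2, ρ, rfl, hx⟩

theorem rd_lt {d : ℕ → Trm} {σ : List Letter} {x a b} (h : Rd d σ x a b) :
    a.length < σ.length := by
  obtain ⟨l, args, ρ, rfl, _⟩ := h
  simp

theorem rd_nil {d : ℕ → Trm} {x a b} : ¬ Rd d [] x a b := by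
  intro h
  simpa using rd_lt h

theorem rd_same {d : ℕ → Trm} {σ : List Letter} {x x' a b b'} (h : Rd d σ x a b)
    (h' : Rd d σ x' a b') : b = b' := by
  obtain ⟨l, args, ρ, rfl, _⟩ := h
  obtain ⟨l2, args2, ρ2, he, _⟩ := h'
  simp at he
  exact he.1.2.2.2

theorem rd_finite (d : ℕ → Trm) (σ : List Letter) :
    {x : Bit | ∃ a b, Rd d σ x a b}.Finite := by
  induction σ generalizing d with
  | nil =>
    refine Set.Finite.subset Set.finite_empty ?_
    rintro x ⟨a, b, h⟩
    exact (rd_nil h).elim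
  | cons L τ ih =>
    cases L with
    | asn y f l args =>
      refine Set.Finite.subset (ih (Function.update d y (Trm.app f (args.map d)))) ?_
      rintro x ⟨a, b, h⟩
      obtain ⟨c, _, h⟩ := rd_asn_cons h
      exact ⟨c, b, h⟩
    | prd r l args b' =>
      refine Set.Finite.subset ((ih d).insert (r, args.map d)) ?_
      rintro x ⟨a, b, h⟩
      rcases rd_prd_cons h with ⟨_, h, _⟩ | ⟨c, _, h⟩
      · exact Or.inl h
      · exact Or.inr ⟨c, b, h⟩

/-- The last assignment to `z` along `σ`, if there is one, determines the final value of `z`. -/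
theorem last_asn (d : ℕ → Trm) (σ : List Letter) (z : ℕ) :
    ((∀ f l args, Letter.asn z f l args ∉ σ) ∧ hx d σ z = d z) ∨
    ∃ a f l args c, σ = a ++ Letter.asn z f l args :: c ∧
      hx d σ z = Trm.app f (args.map (hx d a)) ∧ ∀ d', hx d' σ z = hx d' (a ++ [Letter.asn z f l args]) z := by
  induction σ using List.reverseRecOn with
  | nil => left; simp
  | append_singleton σ L ih =>
    by_cases hL : ∃ f l args, L = Letter.asn z f l args
    · obtain ⟨f, l, args, rfl⟩ := hL
      right
      exact ⟨σ, f, l, args, [], rfl, by simp [hx_append], fun d' => rfl⟩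
    · have key : ∀ d, hx d (σ ++ [L]) z = hx d σ z := by
        intro d
        rw [hx_append]
        cases L with
        | prd p l args b => rfl
        | asn y f l args =>
          have : z ≠ y := by rintro rfl; exact hL ⟨f, l, args, rfl⟩
          simp [Function.update_of_ne this]
      rcases ih with ⟨h1, h2⟩ | ⟨a, f, l, args, c, rfl, h, h3⟩
      · left
        refine ⟨?_, by rw [key, h2]⟩
        intro f l args hm
        rcases List.mem_append.1 hm with hm | hm
        · exact h1 f l args hm
        · exact hL ⟨f, l, args, (List.mem_singleton.1 hm).symm⟩
      · right
        exact ⟨a, f, l, args, c ++ [L], by simp, by rw [key, h], fun d' => by rw [key, h3]⟩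

/-! ### Structure of paths -/

/-- `σ` and `σ'` share a prefix after which the same predicate letter occurs with opposite
truth values. -/
def Div (σ σ' : List Letter) : Prop :=
  ∃ a p l args b r r', σ = a ++ Letter.prd p l args b :: r ∧
    σ' = a ++ Letter.prd p l args (!b) :: r'

theorem Div.append {σ σ' : List Letter} (h : Div σ σ') (τ τ' : List Letter) :
    Div (σ ++ τ) (σ' ++ τ') := by
  obtain ⟨a, p, l, args, b, r, r', rfl, rfl⟩ := h
  exact ⟨a, p, l, args, b, r ++ τ, r' ++ τ', by simp, by simp⟩

theorem Div.prepend {σ σ' : List Letter} (h : Div σ σ') (τ : List Letter) :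
    Div (τ ++ σ) (τ ++ σ') := by
  obtain ⟨a, p, l, args, b, r, r', rfl, rfl⟩ := h
  exact ⟨τ ++ a, p, l, args, b, r, r', by simp, by simp⟩

theorem Div.ne {σ σ' : List Letter} (h : Div σ σ') : σ ≠ σ' := by
  obtain ⟨a, p, l, args, b, r, r', rfl, rfl⟩ := h
  simp

/-- Two distinct complete paths first differ in the truth value of a predicate letter. -/
theorem branch {T : Schema} : ∀ {σ σ' : List Letter}, σ ∈ Paths T → σ' ∈ Paths T →
    σ = σ' ∨ Div σ σ' := by
  induction T with
  | skip =>
    rintro σ σ' h h'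
    left; rw [Set.mem_singleton_iff.1 h, Set.mem_singleton_iff.1 h']
  | assign y f l args =>
    rintro σ σ' h h'
    left; rw [Set.mem_singleton_iff.1 h, Set.mem_singleton_iff.1 h']
  | seq A B ihA ihB =>
    rintro σ σ' ⟨x, hx, y, hy, rfl⟩ ⟨x', hx', y', hy', rfl⟩
    rcases ihA hx hx' with rfl | h
    · rcases ihB hy hy' with rfl | h
      · left; rfl
      · right; exact h.prepend _
    · right; exact h.append _ _
  | ite p l args t e iht ihe =>
    rintro σ σ' (⟨x, hx, rfl⟩ | ⟨x, hx, rfl⟩) (⟨x', hx', rfl⟩ | ⟨x', hx', rfl⟩)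
    · rcases iht hx hx' with rfl | h
      · left; rfl
      · right; exact h.prepend [Letter.prd p l args true]
    · right; exact ⟨[], p, l, args, true, x, x', rfl, rfl⟩
    · right; exact ⟨[], p, l, args, false, x, x', rfl, rfl⟩
    · rcases ihe hx hx' with rfl | h
      · left; rfl
      · right; exact h.prepend [Letter.prd p l args false]
  | whil p l args B ih =>
    rintro σ σ' ⟨n, h⟩ ⟨m, h'⟩
    induction n generalizing σ σ' m with
    | zero =>
      rw [Set.mem_singleton_iff.1 h]
      cases m with
      | zero => left; rw [Set.mem_singleton_iff.1 h']
      | succ m =>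
        obtain ⟨x, hx, y, hy, rfl⟩ := h'
        right; exact ⟨[], p, l, args, false, [], x ++ y, rfl, rfl⟩
    | succ n ihn =>
      obtain ⟨x, hx, y, hy, rfl⟩ := h
      cases m with
      | zero =>
        rw [Set.mem_singleton_iff.1 h']
        right; exact ⟨[], p, l, args, true, x ++ y, [], rfl, rfl⟩
      | succ m =>
        obtain ⟨x', hx', y', hy', rfl⟩ := h'
        rcases ih hx hx' with rfl | h
        · rcases ihn hy m hy' with rfl | h
          · left; rfl
          · right; exact h.prepend (Letter.prd p l args true :: x)
        · right; exact (h.append y y').prepend [Letter.prd p l args true]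

theorem path_prefix_free {T : Schema} {x x' r r' : List Letter} (hx : x ∈ Paths T)
    (hx' : x' ∈ Paths T) (h : x ++ r = x' ++ r') : x = x' ∧ r = r' := by
  rcases branch hx hx' with rfl | hd
  · exact ⟨rfl, by simpa using h⟩
  · exact ((hd.append r r').ne h).elim

theorem paths_nonempty (T : Schema) : (Paths T).Nonempty := by
  induction T with
  | skip => exact ⟨_, rfl⟩
  | assign y f l args => exact ⟨_, rfl⟩
  | seq A B ihA ihB =>
    obtain ⟨x, hx⟩ := ihA
    obtain ⟨y, hy⟩ := ihB
    exact ⟨_, x, hx, y, hy, rfl⟩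
  | ite p l args t e iht ihe =>
    obtain ⟨x, hx⟩ := iht
    exact ⟨_, Or.inl ⟨x, hx, rfl⟩⟩
  | whil p l args B ih => exact ⟨_, 0, rfl⟩

theorem while_false_mem (p l args B) :
    [Letter.prd p l args false] ∈ Paths (Schema.whil p l args B) := ⟨0, rfl⟩

theorem while_true_mem {p l args B x y} (hx : x ∈ Paths B)
    (hy : y ∈ Paths (Schema.whil p l args B)) :
    Letter.prd p l args true :: (x ++ y) ∈ Paths (Schema.whil p l args B) := by
  obtain ⟨n, hy⟩ := hy
  exact ⟨n + 1, x, hx, y, hy, rfl⟩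

theorem while_cases {p l args B σ} (h : σ ∈ Paths (Schema.whil p l args B)) :
    σ = [Letter.prd p l args false] ∨ ∃ x ∈ Paths B, ∃ y ∈ Paths (Schema.whil p l args B),
      σ = Letter.prd p l args true :: (x ++ y) := by
  obtain ⟨n, h⟩ := h
  cases n with
  | zero => left; exact h
  | succ n =>
    obtain ⟨x, hx, y, hy, rfl⟩ := h
    right; exact ⟨x, hx, y, ⟨n, hy⟩, rfl⟩

/-- Induction along the iterations of a loop. -/
theorem while_induction {p l args B} {P : List Letter → Prop}
    (h0 : P [Letter.prd p l args false])
    (h1 : ∀ x ∈ Paths B, ∀ y ∈ Paths (Schema.whil p l args B), P y →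
      P (Letter.prd p l args true :: (x ++ y)))
    {σ} (h : σ ∈ Paths (Schema.whil p l args B)) : P σ := by
  obtain ⟨n, h⟩ := h
  induction n generalizing σ with
  | zero => rw [Set.mem_singleton_iff.1 h]; exact h0
  | succ n ih =>
    obtain ⟨x, hx, y, hy, rfl⟩ := h
    exact h1 x hx y ⟨n, hy⟩ (ih hy)

/-- Concatenations of complete paths through the schemas of a list. -/
def PathsL : List Schema → Set (List Letter)
  | [] => {[]}
  | T :: K => {σ | ∃ x ∈ Paths T, ∃ y ∈ PathsL K, σ = x ++ y}

theorem pathsL_nonempty (K : List Schema) : (PathsL K).Nonempty := by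
  induction K with
  | nil => exact ⟨_, rfl⟩
  | cons T K ih =>
    obtain ⟨x, hx⟩ := paths_nonempty T
    obtain ⟨y, hy⟩ := ih
    exact ⟨_, x, hx, y, hy, rfl⟩

theorem pathsL_append {K K' : List Schema} {σ : List Letter} :
    σ ∈ PathsL (K ++ K') ↔ ∃ x ∈ PathsL K, ∃ y ∈ PathsL K', σ = x ++ y := by
  induction K generalizing σ with
  | nil => simp [PathsL]
  | cons T K ih =>
    constructor
    · rintro ⟨x, hx, y, hy, rfl⟩
      obtain ⟨y1, h1, y2, h2, rfl⟩ := ih.1 hy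
      exact ⟨x ++ y1, ⟨x, hx, y1, h1, rfl⟩, y2, h2, by simp⟩
    · rintro ⟨_, ⟨x, hx, y1, h1, rfl⟩, y2, h2, rfl⟩
      exact ⟨x, hx, y1 ++ y2, ih.2 ⟨y1, h1, y2, h2, rfl⟩, by simp⟩

theorem pathsL_singleton {T : Schema} {σ : List Letter} : σ ∈ PathsL [T] ↔ σ ∈ Paths T := by
  simp [PathsL]

/-- `Cont S T K`: the statement `T` occurs in `S` and `K` is the list of the schemas remaining
to be executed once `T` has been left. -/
inductive Cont : Schema → Schema → List Schema → Prop
  | refl (S : Schema) : Cont S S []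
  | seqL {A B T K} : Cont A T K → Cont (.seq A B) T (K ++ [B])
  | seqR {A B T K} : Cont B T K → Cont (.seq A B) T K
  | iteT {t e T K p l args} : Cont t T K → Cont (.ite p l args t e) T K
  | iteF {t e T K p l args} : Cont e T K → Cont (.ite p l args t e) T K
  | whilB {b T K p l args} : Cont b T K →
      Cont (.whil p l args b) T (K ++ [.whil p l args b])

theorem Cont.occurs {S T K} (h : Cont S T K) : Occurs T S := by
  induction h with
  | refl S => exact .refl S
  | seqL _ ih => exact .seqL ih
  | seqR _ ih => exact .seqR ih
  | iteT _ ih => exact .iteT ih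
  | iteF _ ih => exact .iteF ih
  | whilB _ ih => exact .whilB ih

theorem Occurs.cont {S T} (h : Occurs T S) : ∃ K, Cont S T K := by
  induction h with
  | refl => exact ⟨_, .refl _⟩
  | seqL _ ih => obtain ⟨K, h⟩ := ih; exact ⟨_, .seqL h⟩
  | seqR _ ih => obtain ⟨K, h⟩ := ih; exact ⟨_, .seqR h⟩
  | iteT _ ih => obtain ⟨K, h⟩ := ih; exact ⟨_, .iteT h⟩
  | iteF _ ih => obtain ⟨K, h⟩ := ih; exact ⟨_, .iteF h⟩
  | whilB _ ih => obtain ⟨K, h⟩ := ih; exact ⟨_, .whilB h⟩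

/-- `T` is an if- or while-statement with labelled predicate `r^(l)(args)`. -/
def PStmt : Schema → ℕ → ℕ → List ℕ → Prop
  | .ite p l args _ _, r, m, brgs => p = r ∧ l = m ∧ args = brgs
  | .whil p l args _, r, m, brgs => p = r ∧ l = m ∧ args = brgs
  | _, _, _, _ => False

/-- What remains to be executed of an if- or while-statement once its predicate has been
evaluated to `b`. -/
def Rst : Schema → Bool → List Schema
  | .ite _ _ _ t _, true => [t]
  | .ite _ _ _ _ e, false => [e]
  | .whil p l args B, true => [B, .whil p l args B]
  | _, _ => []

theorem pstmt_path {T r l args} (hT : PStmt T r l args) {b ρ} (h : ρ ∈ PathsL (Rst T b)) :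
    Letter.prd r l args b :: ρ ∈ Paths T := by
  cases T with
  | skip => exact hT.elim
  | assign => exact hT.elim
  | seq => exact hT.elim
  | ite p m brgs t e =>
    obtain ⟨rfl, rfl, rfl⟩ := hT
    cases b
    · exact Or.inr ⟨ρ, pathsL_singleton.1 h, rfl⟩
    · exact Or.inl ⟨ρ, pathsL_singleton.1 h, rfl⟩
  | whil p m brgs B =>
    obtain ⟨rfl, rfl, rfl⟩ := hT
    cases b
    · have : ρ = [] := h
      subst this
      exact while_false_mem _ _ _ _
    · obtain ⟨x, hx, y, hy, rfl⟩ := h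
      exact while_true_mem hx (pathsL_singleton.1 hy)

theorem pstmt_paths_cases {T r l args} (hT : PStmt T r l args) {σ} (h : σ ∈ Paths T) :
    ∃ b, ∃ ρ ∈ PathsL (Rst T b), σ = Letter.prd r l args b :: ρ := by
  cases T with
  | skip => exact hT.elim
  | assign => exact hT.elim
  | seq => exact hT.elim
  | ite p m brgs t e =>
    obtain ⟨rfl, rfl, rfl⟩ := hT
    rcases h with ⟨x, hx, rfl⟩ | ⟨x, hx, rfl⟩
    · exact ⟨true, x, pathsL_singleton.2 hx, rfl⟩
    · exact ⟨false, x, pathsL_singleton.2 hx, rfl⟩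
  | whil p m brgs B =>
    obtain ⟨rfl, rfl, rfl⟩ := hT
    rcases while_cases h with rfl | ⟨x, hx, y, hy, rfl⟩
    · exact ⟨false, [], rfl, rfl⟩
    · exact ⟨true, _, ⟨x, hx, y, pathsL_singleton.2 hy, rfl⟩, rfl⟩

/-- Every predicate letter of a complete path comes from a statement of the schema, which may be
re-entered along any of its paths and left along any of its continuations. -/
theorem split_path (S : Schema) : ∀ {a r l args b ρ},
    a ++ Letter.prd r l args b :: ρ ∈ Paths S →
    ∃ T K, Cont S T K ∧ PStmt T r l args ∧ ρ ∈ PathsL (Rst T b ++ K) ∧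
      ∀ τ ∈ Paths T, ∀ ρ2 ∈ PathsL K, a ++ (τ ++ ρ2) ∈ Paths S := by
  induction S with
  | skip =>
    intro a r l args b ρ h
    have := Set.mem_singleton_iff.1 h
    simp at this
  | assign y f l args =>
    intro a r l args b ρ h
    have := Set.mem_singleton_iff.1 h
    cases a <;> simp at this
  | seq A B ihA ihB =>
    rintro a r l args b ρ ⟨x, hx, y, hy, he⟩
    rcases List.append_eq_append_iff.1 he.symm with ⟨c, rfl, h2⟩ | ⟨c, rfl, h2⟩
    · subst h2
      obtain ⟨T, K, hC, hP, hρ, hre⟩ := ihB hy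
      refine ⟨T, K, .seqR hC, hP, hρ, fun τ hτ ρ2 h2 => ?_⟩
      exact ⟨x, hx, _, hre τ hτ ρ2 h2, by simp⟩
    · cases c with
      | nil =>
        simp only [List.nil_append] at h2
        subst h2
        obtain ⟨T, K, hC, hP, hρ, hre⟩ := ihB (a := []) hy
        refine ⟨T, K, .seqR hC, hP, hρ, fun τ hτ ρ2 h2 => ?_⟩
        exact ⟨a, by simpa using hx, _, hre τ hτ ρ2 h2, by simp⟩
      | cons L c =>
        simp only [List.cons_append, List.cons.injEq] at h2
        obtain ⟨rfl, rfl⟩ := h2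
        obtain ⟨T, K, hC, hP, hρ, hre⟩ := ihA hx
        refine ⟨T, K ++ [B], .seqL hC, hP, ?_, fun τ hτ ρ2 h2 => ?_⟩
        · rw [← List.append_assoc, pathsL_append]
          exact ⟨c, hρ, y, pathsL_singleton.2 hy, rfl⟩
        · obtain ⟨z, hz, w, hw, rfl⟩ := pathsL_append.1 h2
          exact ⟨_, hre τ hτ z hz, w, pathsL_singleton.1 hw, by simp⟩
  | ite p m brgs t e iht ihe =>
    intro a r l args b ρ h
    cases a with
    | nil =>
      rcases h with ⟨x, hx, he⟩ | ⟨x, hx, he⟩ <;>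
      · simp only [List.nil_append, List.cons.injEq, Letter.prd.injEq] at he
        obtain ⟨⟨rfl, rfl, rfl, rfl⟩, rfl⟩ := he
        refine ⟨_, [], .refl _, ⟨rfl, rfl, rfl⟩, pathsL_singleton.2 hx, fun τ hτ ρ2 h2 => ?_⟩
        rw [Set.mem_singleton_iff.1 h2]
        simpa using hτ
    | cons L a =>
      rcases h with ⟨x, hx, he⟩ | ⟨x, hx, he⟩ <;>
      simp only [List.cons_append, List.cons.injEq] at he <;>
      obtain ⟨rfl, rfl⟩ := he
      · obtain ⟨T, K, hC, hP, hρ, hre⟩ := iht hx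
        exact ⟨T, K, .iteT hC, hP, hρ, fun τ hτ ρ2 h2 => Or.inl ⟨_, hre τ hτ ρ2 h2, rfl⟩⟩
      · obtain ⟨T, K, hC, hP, hρ, hre⟩ := ihe hx
        exact ⟨T, K, .iteF hC, hP, hρ, fun τ hτ ρ2 h2 => Or.inr ⟨_, hre τ hτ ρ2 h2, rfl⟩⟩
  | whil p m brgs B ih =>
    intro a r l args b ρ h
    generalize hσ : a ++ Letter.prd r l args b :: ρ = σ at h
    refine while_induction (P := fun σ => ∀ a, a ++ Letter.prd r l args b :: ρ = σ →
      ∃ T K, Cont (.whil p m brgs B) T K ∧ PStmt T r l args ∧ ρ ∈ PathsL (Rst T b ++ K) ∧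
        ∀ τ ∈ Paths T, ∀ ρ2 ∈ PathsL K, a ++ (τ ++ ρ2) ∈ Paths (.whil p m brgs B))
      ?_ ?_ h a hσ
    clear hσ a
    · intro a he
      cases a with
      | cons L a => simp at he
      | nil =>
        simp only [List.nil_append, List.cons.injEq, Letter.prd.injEq] at he
        obtain ⟨⟨rfl, rfl, rfl, rfl⟩, rfl⟩ := he
        refine ⟨_, [], .refl _, ⟨rfl, rfl, rfl⟩, rfl, fun τ hτ ρ2 h2 => ?_⟩
        rw [Set.mem_singleton_iff.1 h2]
        simpa using hτ
    · intro x hx y hy ihy a he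
      cases a with
      | nil =>
        simp only [List.nil_append, List.cons.injEq, Letter.prd.injEq] at he
        obtain ⟨⟨rfl, rfl, rfl, rfl⟩, rfl⟩ := he
        refine ⟨_, [], .refl _, ⟨rfl, rfl, rfl⟩, ?_, fun τ hτ ρ2 h2 => ?_⟩
        · exact ⟨x, hx, y, by simpa [PathsL] using hy, rfl⟩
        rw [Set.mem_singleton_iff.1 h2]
        simpa using hτ
      | cons L a =>
        simp only [List.cons_append, List.cons.injEq] at he
        obtain ⟨rfl, he⟩ := he
        have inY : ∀ c, a = x ++ c → c ++ Letter.prd r l args b :: ρ = y →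
            ∃ T K, Cont (.whil p m brgs B) T K ∧ PStmt T r l args ∧ ρ ∈ PathsL (Rst T b ++ K) ∧
            ∀ τ ∈ Paths T, ∀ ρ2 ∈ PathsL K,
              (Letter.prd p m brgs true :: a) ++ (τ ++ ρ2) ∈ Paths (.whil p m brgs B) := by
          rintro c rfl h2
          obtain ⟨T, K, hC, hP, hρ, hre⟩ := ihy c h2
          refine ⟨T, K, hC, hP, hρ, fun τ hτ ρ2 h2 => ?_⟩
          have := while_true_mem hx (hre τ hτ ρ2 h2)
          simpa using this
        rcases List.append_eq_append_iff.1 he.symm with ⟨c, h1, h2⟩ | ⟨c, h1, h2⟩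
        · exact inY c h1 h2.symm
        · cases c with
          | nil => exact inY [] (by simpa using h1.symm) (by simpa using h2)
          | cons L c =>
            simp only [List.cons_append, List.cons.injEq] at h2
            obtain ⟨rfl, rfl⟩ := h2
            subst h1
            obtain ⟨T, K, hC, hP, hρ, hre⟩ := ih hx
            refine ⟨T, K ++ [.whil p m brgs B], .whilB hC, hP, ?_, fun τ hτ ρ2 h2 => ?_⟩
            · rw [← List.append_assoc, pathsL_append]
              exact ⟨c, hρ, y, pathsL_singleton.2 hy, rfl⟩
            · obtain ⟨z, hz, w, hw, rfl⟩ := pathsL_append.1 h2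
              have := while_true_mem (hre τ hτ z hz) (pathsL_singleton.1 hw)
              simpa using this

/-! ### Consequences of predicate-linearity -/

theorem Occurs.predCount_le {S T} (h : Occurs T S) (r : ℕ) : predCount T r ≤ predCount S r := by
  induction h with
  | refl => exact le_rfl
  | seqL _ ih => simp only [predCount]; omega
  | seqR _ ih => simp only [predCount]; omega
  | iteT _ ih => simp only [predCount]; omega
  | iteF _ ih => simp only [predCount]; omega
  | whilB _ ih => simp only [predCount]; omega

theorem occurs_trans {A B C} (h : Occurs A B) (h' : Occurs B C) : Occurs A C := by
  induction h' with
  | refl => exact h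
  | seqL _ ih => exact .seqL ih
  | seqR _ ih => exact .seqR ih
  | iteT _ ih => exact .iteT ih
  | iteF _ ih => exact .iteF ih
  | whilB _ ih => exact .whilB ih

theorem PStmt.predCount {T r l args} (h : PStmt T r l args) : 1 ≤ predCount T r := by
  cases T with
  | skip => exact h.elim
  | assign => exact h.elim
  | seq => exact h.elim
  | ite p m brgs t e => obtain ⟨rfl, rfl, rfl⟩ := h; simp [SchemaSlicing.predCount]; omega
  | whil p m brgs B => obtain ⟨rfl, rfl, rfl⟩ := h; simp [SchemaSlicing.predCount]

theorem Cont.pos {S T K r l args} (h : Cont S T K) (hP : PStmt T r l args) :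
    1 ≤ predCount S r := hP.predCount.trans (h.occurs.predCount_le r)

/-- In a predicate-linear schema the statement of a predicate and its continuation are unique. -/
theorem cont_unique {S T K} (h : Cont S T K) {r l args T' K' l' args'}
    (hr : predCount S r ≤ 1) (hP : PStmt T r l args) (h' : Cont S T' K')
    (hP' : PStmt T' r l' args') : T = T' ∧ K = K' := by
  induction h generalizing T' K' with
  | refl S =>
    cases h' with
    | refl => exact ⟨rfl, rfl⟩
    | seqL h => exact hP.elim
    | seqR h => exact hP.elim
    | iteT h =>
      have := h.pos hP'; obtain ⟨rfl, -, -⟩ := hP; simp [predCount] at hr; omega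
    | iteF h =>
      have := h.pos hP'; obtain ⟨rfl, -, -⟩ := hP; simp [predCount] at hr; omega
    | whilB h =>
      have := h.pos hP'; obtain ⟨rfl, -, -⟩ := hP; simp [predCount] at hr; omega
  | seqL h ih =>
    have h1 := h.pos hP
    cases h' with
    | refl => exact hP'.elim
    | seqL h' =>
      obtain ⟨rfl, rfl⟩ := ih (by simp only [predCount] at hr; omega) hP h' hP'
      exact ⟨rfl, rfl⟩
    | seqR h' => have := h'.pos hP'; simp only [predCount] at hr; omega
  | seqR h ih =>
    have h1 := h.pos hP
    cases h' with
    | refl => exact hP'.elim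
    | seqR h' => exact ih (by simp only [predCount] at hr; omega) hP h' hP'
    | seqL h' => have := h'.pos hP'; simp only [predCount] at hr; omega
  | iteT h ih =>
    have h1 := h.pos hP
    cases h' with
    | refl => obtain ⟨rfl, -, -⟩ := hP'; simp [predCount] at hr; omega
    | iteT h' => exact ih (by simp only [predCount] at hr; omega) hP h' hP'
    | iteF h' => have := h'.pos hP'; simp only [predCount] at hr; omega
  | iteF h ih =>
    have h1 := h.pos hP
    cases h' with
    | refl => obtain ⟨rfl, -, -⟩ := hP'; simp [predCount] at hr; omega
    | iteF h' => exact ih (by simp only [predCount] at hr; omega) hP h' hP'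
    | iteT h' => have := h'.pos hP'; simp only [predCount] at hr; omega
  | whilB h ih =>
    have h1 := h.pos hP
    cases h' with
    | refl => obtain ⟨rfl, -, -⟩ := hP'; simp [predCount] at hr; omega
    | whilB h' =>
      obtain ⟨rfl, rfl⟩ := ih (by simp only [predCount] at hr; omega) hP h' hP'
      exact ⟨rfl, rfl⟩

theorem PStmt.unique {T r l args l' args'} (h : PStmt T r l args) (h' : PStmt T r l' args') :
    l = l' ∧ args = args' := by
  cases T with
  | skip => exact h.elim
  | assign => exact h.elim
  | seq => exact h.elim
  | ite p m brgs t e =>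
    obtain ⟨rfl, rfl, rfl⟩ := h; obtain ⟨_, rfl, rfl⟩ := h'; exact ⟨rfl, rfl⟩
  | whil p m brgs B =>
    obtain ⟨rfl, rfl, rfl⟩ := h; obtain ⟨_, rfl, rfl⟩ := h'; exact ⟨rfl, rfl⟩

/-- After any prefix of a path ending just before a predicate, both truth values are possible. -/
theorem flip_path {S a r l args b ρ} (h : a ++ Letter.prd r l args b :: ρ ∈ Paths S) (b' : Bool) :
    ∃ ρ', a ++ Letter.prd r l args b' :: ρ' ∈ Paths S := by
  obtain ⟨T, K, -, hP, -, hre⟩ := split_path S h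
  obtain ⟨x, hx⟩ := pathsL_nonempty (Rst T b')
  obtain ⟨y, hy⟩ := pathsL_nonempty K
  exact ⟨x ++ y, by simpa using hre _ (pstmt_path hP hx) y hy⟩

/-- Two paths may exchange their tails after evaluating the same predicate symbol. -/
theorem swap_path {S a r l args b ρ a' l' args' b' ρ'} (hL : PredLinear S)
    (h : a ++ Letter.prd r l args b :: ρ ∈ Paths S)
    (h' : a' ++ Letter.prd r l' args' b' :: ρ' ∈ Paths S) :
    l' = l ∧ args' = args ∧ a' ++ Letter.prd r l args b :: ρ ∈ Paths S := by
  obtain ⟨T, K, hC, hP, hρ, -⟩ := split_path S h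
  obtain ⟨T', K', hC', hP', -, hre⟩ := split_path S h'
  obtain ⟨rfl, rfl⟩ := cont_unique hC (hL r) hP hC' hP'
  obtain ⟨rfl, rfl⟩ := hP.unique hP'
  obtain ⟨x, hx, y, hy, rfl⟩ := pathsL_append.1 hρ
  exact ⟨rfl, rfl, by simpa using hre _ (pstmt_path hP hx) y hy⟩

/-- A segment through the statement of a predicate may be replaced by any other one. -/
theorem link_replace {S T0 p l args α ν ν' rest} (hL : PredLinear S) (hO : Occurs T0 S)
    (hP : PStmt T0 p l args) (hν : ν ∈ Paths T0) (hν' : ν' ∈ Paths T0)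
    (h : α ++ (ν ++ rest) ∈ Paths S) : α ++ (ν' ++ rest) ∈ Paths S := by
  obtain ⟨b, ρ, hρ, rfl⟩ := pstmt_paths_cases hP hν
  obtain ⟨K0, hC0⟩ := hO.cont
  obtain ⟨T, K, hC, hP', hρ', hre⟩ := split_path S (a := α) h
  obtain ⟨rfl, rfl⟩ := cont_unique hC (hL p) hP' hC0 hP
  obtain ⟨x, hx, y, hy, he⟩ := pathsL_append.1 hρ'
  have := path_prefix_free (r := y) (r' := rest) (pstmt_path hP hx) hν
    (by simpa using he.symm)
  obtain ⟨-, rfl⟩ := this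
  exact hre _ hν' _ hy

theorem predCount_of_mem {T : Schema} : ∀ {σ r l args b}, σ ∈ Paths T →
    Letter.prd r l args b ∈ σ → 1 ≤ predCount T r := by
  intro σ r l args b h hm
  obtain ⟨a, ρ, rfl⟩ := List.append_of_mem hm
  obtain ⟨T, K, hC, hP, -⟩ := split_path _ h
  exact hC.pos hP

/-- In a predicate-linear schema, a letter of a predicate of the statement `T0` is only met
inside complete paths through `T0`. -/
theorem inside_stmt {S T0 : Schema} (hO : Occurs T0 S) {r l args b} (hr : predCount S r ≤ 1)
    (h0 : 1 ≤ predCount T0 r) : ∀ {σ}, σ ∈ Paths S → Letter.prd r l args b ∈ σ →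
    ∃ a τ c, σ = a ++ (τ ++ c) ∧ τ ∈ Paths T0 ∧ Letter.prd r l args b ∈ τ := by
  induction hO with
  | refl => intro σ h hm; exact ⟨[], σ, [], by simp, h, hm⟩
  | seqL hO ih =>
    rintro σ ⟨x, hx, y, hy, rfl⟩ hm
    have := hO.predCount_le r
    simp only [predCount] at hr
    rcases List.mem_append.1 hm with hm | hm
    · obtain ⟨a, τ, c, rfl, h1, h2⟩ := ih (by omega) hx hm
      exact ⟨a, τ, c ++ y, by simp, h1, h2⟩
    · have := predCount_of_mem hy hm
      omega
  | seqR hO ih =>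
    rintro σ ⟨x, hx, y, hy, rfl⟩ hm
    have := hO.predCount_le r
    simp only [predCount] at hr
    rcases List.mem_append.1 hm with hm | hm
    · have := predCount_of_mem hx hm
      omega
    · obtain ⟨a, τ, c, rfl, h1, h2⟩ := ih (by omega) hy hm
      exact ⟨x ++ a, τ, c, by simp, h1, h2⟩
  | @iteT t e p _ _ hO ih =>
    rintro σ h hm
    have := hO.predCount_le r
    have hne : p ≠ r := by rintro rfl; simp [predCount] at hr; omega
    simp only [predCount] at hr
    rcases h with ⟨x, hx, rfl⟩ | ⟨x, hx, rfl⟩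
    · rcases List.mem_cons.1 hm with hm | hm
      · simp at hm; omega
      obtain ⟨a, τ, c, rfl, h1, h2⟩ := ih (by omega) hx hm
      exact ⟨_ :: a, τ, c, by simp; rfl, h1, h2⟩
    · rcases List.mem_cons.1 hm with hm | hm
      · simp at hm; omega
      have := predCount_of_mem hx hm
      omega
  | @iteF t e p _ _ hO ih =>
    rintro σ h hm
    have := hO.predCount_le r
    have hne : p ≠ r := by rintro rfl; simp [predCount] at hr; omega
    simp only [predCount] at hr
    rcases h with ⟨x, hx, rfl⟩ | ⟨x, hx, rfl⟩
    · rcases List.mem_cons.1 hm with hm | hm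
      · simp at hm; omega
      have := predCount_of_mem hx hm
      omega
    · rcases List.mem_cons.1 hm with hm | hm
      · simp at hm; omega
      obtain ⟨a, τ, c, rfl, h1, h2⟩ := ih (by omega) hx hm
      exact ⟨_ :: a, τ, c, by simp; rfl, h1, h2⟩
  | @whilB B p _ _ hO ih =>
    intro σ h
    have := hO.predCount_le r
    have hne : p ≠ r := by rintro rfl; simp [predCount] at hr; omega
    simp only [predCount] at hr
    refine while_induction (P := fun σ => Letter.prd r l args b ∈ σ →
      ∃ a τ c, σ = a ++ (τ ++ c) ∧ τ ∈ Paths T0 ∧ Letter.prd r l args b ∈ τ) ?_ ?_ h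
    · intro hm
      simp at hm; omega
    · intro x hx y hy ihy hm
      rcases List.mem_cons.1 hm with hm | hm
      · simp at hm; omega
      rcases List.mem_append.1 hm with hm | hm
      · obtain ⟨a, τ, c, rfl, h1, h2⟩ := ih (by omega) hx hm
        exact ⟨_ :: a, τ, c ++ y, by simp; rfl, h1, h2⟩
      · obtain ⟨a, τ, c, rfl, h1, h2⟩ := ihy hm
        exact ⟨_ :: (x ++ a), τ, c, by simp; rfl, h1, h2⟩

/-! ### Assignments along paths -/

theorem assignsWith_of_mem {T : Schema} : ∀ {σ y f l args}, σ ∈ Paths T →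
    Letter.asn y f l args ∈ σ → AssignsWith T f y := by
  induction T with
  | skip =>
    rintro σ y f l args h hm
    rw [Set.mem_singleton_iff.1 h] at hm; simp at hm
  | assign =>
    rintro σ y f l args h hm
    rw [Set.mem_singleton_iff.1 h] at hm
    simp at hm
    exact ⟨hm.2.1.symm, hm.1.symm⟩
  | seq A B ihA ihB =>
    rintro σ y f l args ⟨x, hx, z, hz, rfl⟩ hm
    rcases List.mem_append.1 hm with hm | hm
    · exact Or.inl (ihA hx hm)
    · exact Or.inr (ihB hz hm)
  | ite p m brgs t e iht ihe =>
    rintro σ y f l args (⟨x, hx, rfl⟩ | ⟨x, hx, rfl⟩) hm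
    · exact Or.inl (iht hx (by simpa using hm))
    · exact Or.inr (ihe hx (by simpa using hm))
  | whil p m brgs B ih =>
    rintro σ y f l args h
    refine while_induction
      (P := fun σ => Letter.asn y f l args ∈ σ → AssignsWith (.whil p m brgs B) f y) ?_ ?_ h
    · simp
    · intro x hx z hz ihz hm
      rcases List.mem_cons.1 hm with hm | hm
      · simp at hm
      rcases List.mem_append.1 hm with hm | hm
      · exact ih hx hm
      · exact ihz hm

theorem AssignsWith.assignsTo {T : Schema} {f y} (h : AssignsWith T f y) : AssignsTo T y := by
  induction T with
  | skip => exact h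
  | assign => exact h.2
  | seq A B ihA ihB => exact h.imp ihA ihB
  | ite p m brgs t e iht ihe => exact h.imp iht ihe
  | whil p m brgs B ih => exact ih h

theorem exists_path_assigning {T : Schema} {y} (h : AssignsTo T y) :
    ∃ σ ∈ Paths T, ∃ f l args, Letter.asn y f l args ∈ σ := by
  induction T with
  | skip => exact h.elim
  | assign z f l args =>
    have : z = y := h
    subst this
    exact ⟨_, rfl, f, l, args, by simp⟩
  | seq A B ihA ihB =>
    rcases h with h | h
    · obtain ⟨σ, hσ, f, l, args, hm⟩ := ihA h
      obtain ⟨z, hz⟩ := paths_nonempty B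
      exact ⟨_, ⟨σ, hσ, z, hz, rfl⟩, f, l, args, by simp [hm]⟩
    · obtain ⟨σ, hσ, f, l, args, hm⟩ := ihB h
      obtain ⟨z, hz⟩ := paths_nonempty A
      exact ⟨_, ⟨z, hz, σ, hσ, rfl⟩, f, l, args, by simp [hm]⟩
  | ite p m brgs t e iht ihe =>
    rcases h with h | h
    · obtain ⟨σ, hσ, f, l, args, hm⟩ := iht h
      exact ⟨_, Or.inl ⟨σ, hσ, rfl⟩, f, l, args, by simp [hm]⟩
    · obtain ⟨σ, hσ, f, l, args, hm⟩ := ihe h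
      exact ⟨_, Or.inr ⟨σ, hσ, rfl⟩, f, l, args, by simp [hm]⟩
  | whil p m brgs B ih =>
    obtain ⟨σ, hσ, f, l, args, hm⟩ := ih h
    exact ⟨_, while_true_mem hσ (while_false_mem _ _ _ _), f, l, args, by simp [hm]⟩

theorem hx_unassigned {T : Schema} {σ z} (h : σ ∈ Paths T) (hz : ¬ AssignsTo T z)
    (d : ℕ → Trm) : hx d σ z = d z := by
  rcases last_asn d σ z with ⟨-, h1⟩ | ⟨a, f, l, args, c, rfl, -⟩
  · exact h1
  · exact (hz (assignsWith_of_mem (f := f) (l := l) (args := args) h (by simp)).assignsTo).elim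

/-! ### Freeness: no predicate term is evaluated twice along a path -/

theorem read_once_aux {S : Schema} (hF : Free S) {σ a r l args b x b' c}
    (hσ : σ ∈ Paths S)
    (hx : x = (r, args.map (hx eSt a)))
    (h : Rd eSt σ x (a ++ Letter.prd r l args b :: c) b') : False := by
  subst hx
  obtain ⟨l2, args2, ρ2, he2, hx2⟩ := h
  rw [he2] at hσ
  obtain ⟨ρ3, h3⟩ := flip_path hσ (!b)
  obtain ⟨i, hi⟩ := hF _ ⟨_, List.prefix_refl _, h3⟩
  rw [hAgrees_iff] at hi
  have e1 := hi (r, args.map (SchemaSlicing.hx eSt a)) a b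
    ⟨l, args, c ++ Letter.prd r l2 args2 (!b) :: ρ3, by simp, rfl⟩
  have e2 := hi (r, args.map (SchemaSlicing.hx eSt a)) _ (!b) ⟨l2, args2, ρ3, rfl, hx2⟩
  rw [e1] at e2
  simp at e2

/-- Along a path of a free schema each predicate term is evaluated at most once. -/
theorem read_once {S : Schema} (hF : Free S) {σ x a b a' b'} (hσ : σ ∈ Paths S)
    (h : Rd eSt σ x a b) (h' : Rd eSt σ x a' b') : a = a' ∧ b = b' := by
  suffices a = a' by subst this; exact ⟨rfl, rd_same h h'⟩
  have h0 := h
  have h0' := h'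
  obtain ⟨l, args, ρ, he, hx⟩ := h
  obtain ⟨l', args', ρ', he', hx'⟩ := h'
  rcases List.append_eq_append_iff.1 (he.symm.trans he') with ⟨c, rfl, h2⟩ | ⟨c, rfl, h2⟩
  · cases c with
    | nil => simp
    | cons L c =>
      simp only [List.cons_append, List.cons.injEq] at h2
      obtain ⟨rfl, -⟩ := h2
      exact (read_once_aux (x := x) hF hσ (Prod.ext rfl hx) h0').elim
  · cases c with
    | nil => simp
    | cons L c =>
      simp only [List.cons_append, List.cons.injEq] at h2
      obtain ⟨rfl, -⟩ := h2
      exact (read_once_aux (x := x) hF hσ (Prod.ext rfl hx') h0).elim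

/-! ### Runs and their existence -/

/-- `σ` is the terminating path of `S` under the Herbrand interpretation `i`. -/
def RunsTo (S : Schema) (i : HInterp) (σ : List Letter) : Prop := σ ∈ Paths S ∧ hAgrees i σ

theorem RunsTo.unique {S i σ τ} (h : RunsTo S i σ) (h' : RunsTo S i τ) : σ = τ := by
  rcases branch h.1 h'.1 with h0 | ⟨a, p, l, args, b, r, r', rfl, rfl⟩
  · exact h0
  · have h1 := (hAgrees_iff _ _).1 h.2 _ _ _ (rd_intro eSt a p l args b r)
    have h2 := (hAgrees_iff _ _).1 h'.2 _ _ _ (rd_intro eSt a p l args (!b) r')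
    rw [h1] at h2
    simp at h2

/-- `w` is a while predicate of `S`. -/
def IsW (S : Schema) (w : ℕ) : Prop := ∃ l args B, Occurs (Schema.whil w l args B) S

/-- Only finitely many predicate terms of while predicates of `S` are true under `i`. -/
def FinT (S : Schema) (i : HInterp) : Prop := {x : Bit | IsW S x.1 ∧ val i x = true}.Finite

/-- Only finitely many predicate terms are true under `i`. -/
def FinSupp (i : HInterp) : Prop := {x : Bit | val i x = true}.Finite

theorem FinSupp.finT {S i} (h : FinSupp i) : FinT S i :=
  Set.Finite.subset h fun _ hx => hx.2

/-- Number of constructors of a schema. -/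
def ssize : Schema → ℕ
  | .skip => 1
  | .assign _ _ _ _ => 1
  | .seq a b => ssize a + ssize b + 1
  | .ite _ _ _ t e => ssize t + ssize e + 1
  | .whil _ _ _ b => ssize b + 1

theorem hAgrees_snoc_prd {i a r l args b} (h : hAgrees i a)
    (hb : i r (args.map (hx eSt a)) = b) : hAgrees i (a ++ [Letter.prd r l args b]) := by
  rw [hAgrees_iff] at h ⊢
  intro x c b' hr
  rcases rd_append hr with h1 | ⟨c, rfl, h1⟩
  · exact h _ _ _ h1
  · rcases rd_prd_cons h1 with ⟨-, rfl, rfl⟩ | ⟨c, -, h1⟩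
    · exact hb
    · exact (rd_nil h1).elim

theorem hAgrees_snoc_asn {i a y f l args} (h : hAgrees i a) :
    hAgrees i (a ++ [Letter.asn y f l args]) := by
  rw [hAgrees_iff] at h ⊢
  intro x c b' hr
  rcases rd_append hr with h1 | ⟨c, rfl, h1⟩
  · exact h _ _ _ h1
  · obtain ⟨c, -, h1⟩ := rd_asn_cons h1
    exact (rd_nil h1).elim

open Classical in
/-- Execution from a stack `K` of pending schemas terminates, since each further loop iteration
evaluates a new true term of a while predicate. -/
theorem run_from {S : Schema} (hF : Free S) {i : HInterp} (W : Finset Bit)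
    (hW : ∀ x : Bit, IsW S x.1 → val i x = true → x ∈ W) :
    ∀ (n m : ℕ) (a : List Letter) (K : List Schema),
      (W.filter fun x => ¬ ∃ c b, Rd eSt a x c b).card = n → (K.map ssize).sum = m →
      (∀ T ∈ K, Occurs T S) → (∀ ρ ∈ PathsL K, a ++ ρ ∈ Paths S) → hAgrees i a →
      ∃ σ, RunsTo S i σ := by
  intro n
  induction n using Nat.strong_induction_on with
  | _ n ihn =>
  intro m
  induction m using Nat.strong_induction_on with
  | _ m ihm =>
  intro a K hn hm hO hP hA
  -- A step along which the stack shrinks: the number of unread terms cannot increase.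
  have step : ∀ (c : List Letter) (K' : List Schema), (K'.map ssize).sum < m →
      (∀ T ∈ K', Occurs T S) → (∀ ρ ∈ PathsL K', a ++ c ++ ρ ∈ Paths S) →
      hAgrees i (a ++ c) → ∃ σ, RunsTo S i σ := by
    intro c K' hlt hO' hP' hA'
    have hle : (W.filter fun x => ¬ ∃ c' b, Rd eSt (a ++ c) x c' b).card ≤ n := by
      rw [← hn]
      refine Finset.card_le_card fun x hx => ?_
      rw [Finset.mem_filter] at hx ⊢
      refine ⟨hx.1, ?_⟩
      rintro ⟨c', b, h⟩
      exact hx.2 ⟨c', b, rd_append_left h c⟩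
    rcases hle.lt_or_eq with h | h
    · exact ihn _ h _ (a ++ c) K' rfl rfl hO' hP' hA'
    · exact ihm _ hlt (a ++ c) K' h rfl hO' hP' hA'
  cases K with
  | nil => exact ⟨a, by simpa using hP [] rfl, hA⟩
  | cons T K =>
    have hOK : ∀ T' ∈ K, Occurs T' S := fun T' h => hO T' (List.mem_cons_of_mem _ h)
    have hOT := hO T List.mem_cons_self
    cases T with
    | skip =>
      refine step [] K ?_ hOK ?_ (by simpa using hA)
      · simp [ssize] at hm; omega
      · intro ρ hρ
        simpa using hP ρ ⟨[], rfl, ρ, hρ, rfl⟩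
    | assign y f l args =>
      refine step [Letter.asn y f l args] K ?_ hOK ?_ (hAgrees_snoc_asn hA)
      · simp [ssize] at hm; omega
      · intro ρ hρ
        simpa using hP _ ⟨_, rfl, ρ, hρ, rfl⟩
    | seq A B =>
      refine step [] (A :: B :: K) ?_ ?_ ?_ (by simpa using hA)
      · simp [ssize] at hm ⊢; omega
      · intro T' hT'
        simp only [List.mem_cons] at hT'
        rcases hT' with rfl | rfl | h
        · exact occurs_trans (.seqL (.refl _)) hOT
        · exact occurs_trans (.seqR (.refl _)) hOT
        · exact hOK _ h
      · rintro ρ ⟨x, hx, _, ⟨y, hy, z, hz, rfl⟩, rfl⟩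
        have := hP _ ⟨_, ⟨x, hx, y, hy, rfl⟩, z, hz, rfl⟩
        simpa using this
    | ite r l args t e =>
      cases hb : i r (args.map (hx eSt a)) with
      | true =>
        refine step [Letter.prd r l args true] (t :: K) ?_ ?_ ?_ (hAgrees_snoc_prd hA hb)
        · simp [ssize] at hm ⊢; omega
        · intro T' hT'
          rcases List.mem_cons.1 hT' with rfl | h
          · exact occurs_trans (.iteT (.refl _)) hOT
          · exact hOK _ h
        · rintro ρ ⟨x, hx, y, hy, rfl⟩
          simpa using hP _ ⟨_, Or.inl ⟨x, hx, rfl⟩, y, hy, rfl⟩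
      | false =>
        refine step [Letter.prd r l args false] (e :: K) ?_ ?_ ?_ (hAgrees_snoc_prd hA hb)
        · simp [ssize] at hm ⊢; omega
        · intro T' hT'
          rcases List.mem_cons.1 hT' with rfl | h
          · exact occurs_trans (.iteF (.refl _)) hOT
          · exact hOK _ h
        · rintro ρ ⟨x, hx, y, hy, rfl⟩
          simpa using hP _ ⟨_, Or.inr ⟨x, hx, rfl⟩, y, hy, rfl⟩
    | whil r l args B =>
      cases hb : i r (args.map (hx eSt a)) with
      | false =>
        refine step [Letter.prd r l args false] K ?_ hOK ?_ (hAgrees_snoc_prd hA hb)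
        · simp [ssize] at hm ⊢; omega
        · rintro ρ hρ
          simpa using hP _ ⟨_, while_false_mem r l args B, ρ, hρ, rfl⟩
      | true =>
        have hP' : ∀ ρ ∈ PathsL (B :: .whil r l args B :: K),
            a ++ [Letter.prd r l args true] ++ ρ ∈ Paths S := by
          rintro ρ ⟨x, hx, _, ⟨y, hy, z, hz, rfl⟩, rfl⟩
          have := hP _ ⟨_, while_true_mem hx hy, z, hz, rfl⟩
          simpa using this
        refine ihn _ ?_ _ (a ++ [Letter.prd r l args true]) (B :: .whil r l args B :: K) rfl rfl
          ?_ hP' (hAgrees_snoc_prd hA hb)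
        · rw [← hn]
          refine Finset.card_lt_card ?_
          rw [Finset.ssubset_iff_of_subset]
          · refine ⟨(r, args.map (hx eSt a)), ?_, ?_⟩
            · rw [Finset.mem_filter]
              refine ⟨hW _ ⟨l, args, B, hOT⟩ hb, ?_⟩
              rintro ⟨c, b, h⟩
              obtain ⟨ρ, hρ⟩ := pathsL_nonempty (B :: .whil r l args B :: K)
              have hρ := hP' ρ hρ
              rw [List.append_assoc] at hρ
              have h1 := rd_append_left h ([Letter.prd r l args true] ++ ρ)
              have h2 := read_once hF hρ h1 (rd_intro eSt a r l args true ρ)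
              rw [h2.1] at h
              exact lt_irrefl _ (rd_lt h)
            · rw [Finset.mem_filter]
              intro h
              exact h.2 ⟨a, true, rd_intro eSt a r l args true []⟩
          · intro x hx
            rw [Finset.mem_filter] at hx ⊢
            refine ⟨hx.1, ?_⟩
            rintro ⟨c', b, h⟩
            exact hx.2 ⟨c', b, rd_append_left h _⟩
        · intro T' hT'
          simp only [List.mem_cons] at hT'
          rcases hT' with rfl | rfl | h
          · exact occurs_trans (.whilB (.refl _)) hOT
          · exact hOT
          · exact hOK _ h

theorem exists_run {S : Schema} (hF : Free S) {i : HInterp} (hi : FinT S i) :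
    ∃ σ, RunsTo S i σ := by
  classical
  refine run_from hF hi.toFinset (fun x h1 h2 => hi.mem_toFinset.2 ⟨h1, h2⟩) _ _ [] [S] rfl rfl ?_ ?_ ?_
  · intro T hT
    rw [List.mem_singleton.1 hT]
    exact .refl _
  · intro ρ hρ
    simpa using pathsL_singleton.1 hρ
  · rw [hAgrees_iff]
    intro x a b h
    exact (rd_nil h).elim

/-! ### Changing an interpretation at one predicate term -/

open Classical in
/-- The interpretation `i` with its value at the predicate term `x` negated. -/
noncomputable def flp (i : HInterp) (x : Bit) : HInterp :=
  fun r s => if (r, s) = x then !(i r s) else i r s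

theorem val_flp_self (i : HInterp) (x : Bit) : val (flp i x) x = !val i x := by
  simp [val, flp]

theorem val_flp_ne (i : HInterp) {x y : Bit} (h : y ≠ x) : val (flp i x) y = val i y := by
  have : (y.1, y.2) ≠ x := h
  simp [val, flp, this]

theorem hinterp_ext {i j : HInterp} (h : ∀ x, val i x = val j x) : i = j := by
  funext r s
  exact h (r, s)

theorem flp_flp (i : HInterp) (x : Bit) : flp (flp i x) x = i := by
  apply hinterp_ext
  intro y
  by_cases h : y = x
  · subst h; simp [val_flp_self]
  · simp [val_flp_ne _ h]

theorem flp_comm (i : HInterp) (x y : Bit) : flp (flp i x) y = flp (flp i y) x := by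
  apply hinterp_ext
  intro z
  by_cases hx : z = x <;> by_cases hy : z = y
  · subst hx; subst hy; rfl
  · subst hx; rw [val_flp_ne _ hy, val_flp_self, val_flp_self, val_flp_ne _ hy]
  · subst hy; rw [val_flp_ne _ hx, val_flp_self, val_flp_self, val_flp_ne _ hx]
  · simp [val_flp_ne _ hx, val_flp_ne _ hy]

theorem FinT.flp {S i} (h : FinT S i) (x : Bit) : FinT S (flp i x) := by
  refine Set.Finite.subset (Set.Finite.insert x h) ?_
  rintro y ⟨h1, h2⟩
  by_cases hy : y = x
  · exact Or.inl hy
  · rw [val_flp_ne _ hy] at h2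
    exact Or.inr ⟨h1, h2⟩

theorem FinSupp.flp {i} (h : FinSupp i) (x : Bit) : FinSupp (flp i x) := by
  refine Set.Finite.subset (Set.Finite.insert x h) ?_
  intro y h2
  by_cases hy : y = x
  · exact Or.inl hy
  · rw [Set.mem_ofPred_eq, val_flp_ne _ hy] at h2
    exact Or.inr h2

theorem ptcouple_flp (i : HInterp) (x : Bit) : PTCouple x.1 x.2 i (flp i x) := by
  constructor
  · have := val_flp_self i x
    simp only [val] at this
    simp [this]
  · intro q ss h
    exact (val_flp_ne i (y := (q, ss)) h).symm

theorem PTCouple.eq_flp {p ts i j} (h : PTCouple p ts i j) : j = flp i (p, ts) := by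
  apply hinterp_ext
  intro y
  by_cases hy : y = (p, ts)
  · subst hy
    rw [val_flp_self]
    have := h.1
    simp only [val]
    cases h1 : i p ts <;> cases h2 : j p ts <;> simp_all
  · rw [val_flp_ne _ hy]
    exact (h.2 y.1 y.2 hy).symm

/-! ### The value computed for a variable -/

open Classical in
/-- The terminating path of `S` under `i`; the junk value `[]` is used if there is none. -/
noncomputable def run (S : Schema) (i : HInterp) : List Letter :=
  if h : ∃ σ, RunsTo S i σ then h.choose else []

/-- The final value of `u` under `i`. -/
noncomputable def outv (S : Schema) (u : ℕ) (i : HInterp) : Trm := hexec (run S i) u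

theorem RunsTo.run_eq {S i σ} (h : RunsTo S i σ) : run S i = σ := by
  have h' : ∃ σ, RunsTo S i σ := ⟨σ, h⟩
  rw [run, dif_pos h']
  exact h'.choose_spec.unique h

theorem run_spec {S : Schema} (hF : Free S) {i : HInterp} (hi : FinT S i) :
    RunsTo S i (run S i) := by
  obtain ⟨σ, h⟩ := exists_run hF hi
  rwa [h.run_eq]

theorem RunsTo.val {S i σ} (h : RunsTo S i σ) {x a b} (hr : Rd eSt σ x a b) : val i x = b :=
  (hAgrees_iff _ _).1 h.2 _ _ _ hr

/-- If changing `i` at `x` changes the run, then both runs evaluate `x`, after the same head. -/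
theorem runs_diverge {S : Schema} {i : HInterp} {x : Bit} {σ τ : List Letter}
    (hσ : RunsTo S i σ) (hτ : RunsTo S (flp i x) τ) (hne : σ ≠ τ) :
    ∃ a l args ρ ρ', σ = a ++ Letter.prd x.1 l args (val i x) :: ρ ∧
      τ = a ++ Letter.prd x.1 l args (!val i x) :: ρ' ∧ x.2 = args.map (hx eSt a) := by
  rcases branch hσ.1 hτ.1 with h | ⟨a, p, l, args, b, r, r', rfl, rfl⟩
  · exact (hne h).elim
  · have h1 := hσ.val (rd_intro eSt a p l args b r)
    have h2 := hτ.val (rd_intro eSt a p l args (!b) r')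
    by_cases hx : (p, args.map (hx eSt a)) = x
    · subst hx
      exact ⟨a, l, args, r, r', by rw [h1], by rw [h1], rfl⟩
    · rw [val_flp_ne _ hx, h1] at h2
      simp at h2

theorem sens_read {S : Schema} (hF : Free S) {i : HInterp} (hi : FinT S i) {x : Bit} {u : ℕ}
    (hs : outv S u (flp i x) ≠ outv S u i) :
    ∃ a l args ρ ρ', run S i = a ++ Letter.prd x.1 l args (val i x) :: ρ ∧
      run S (flp i x) = a ++ Letter.prd x.1 l args (!val i x) :: ρ' ∧
      x.2 = args.map (hx eSt a) := by
  refine runs_diverge (run_spec hF hi) (run_spec hF (hi.flp x)) ?_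
  intro h
  exact hs (by rw [outv, outv, h])

/-- An executable head leading to a predicate is a prefix of the run. -/
theorem read_of_head {S : Schema} (hF : Free S) {i : HInterp} (hi : FinT S i)
    {γ q l args b ρ} (hp : γ ++ Letter.prd q l args b :: ρ ∈ Paths S) (hγ : hAgrees i γ) :
    ∃ b', Rd eSt (run S i) (q, args.map (hx eSt γ)) γ b' := by
  have hR := run_spec hF hi
  rcases branch hp hR.1 with h | ⟨a, p, m, brgs, c, r, r', h1, h2⟩
  · rw [← h]
    exact ⟨b, rd_intro _ _ _ _ _ _ _⟩
  · have hv : val i (p, brgs.map (hx eSt a)) = !c := hR.val (by rw [h2]; exact rd_intro _ _ _ _ _ _ _)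
    rcases List.append_eq_append_iff.1 h1 with ⟨d, rfl, h3⟩ | ⟨d, rfl, h3⟩
    · cases d with
      | nil =>
        simp only [List.nil_append, List.cons.injEq, Letter.prd.injEq] at h3
        obtain ⟨⟨rfl, rfl, rfl, rfl⟩, -⟩ := h3
        rw [h2]
        exact ⟨!b, by simpa using rd_intro eSt γ q l args (!b) r'⟩
      | cons L d =>
        simp only [List.cons_append, List.cons.injEq] at h3
        obtain ⟨rfl, -⟩ := h3
        rw [h2]
        exact ⟨b, by simpa using rd_intro eSt γ q l args b (d ++ Letter.prd p m brgs (!c) :: r')⟩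
    · cases d with
      | nil =>
        simp only [List.nil_append, List.cons.injEq, Letter.prd.injEq] at h3
        obtain ⟨⟨rfl, rfl, rfl, rfl⟩, -⟩ := h3
        rw [h2]
        exact ⟨!c, by simpa using rd_intro eSt a p m brgs (!c) r'⟩
      | cons L d =>
        simp only [List.cons_append, List.cons.injEq] at h3
        obtain ⟨rfl, -⟩ := h3
        have := (hAgrees_iff _ _).1 hγ _ _ _ (rd_intro eSt a p m brgs c d)
        rw [this] at hv
        simp at hv

open Classical in
/-- Every couple may be replaced by one having only finitely many true predicate terms. -/
theorem restrict_couple {S : Schema} {i : HInterp} {x : Bit} {u : ℕ} {σ τ : List Letter}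
    (hσ : RunsTo S i σ) (hτ : RunsTo S (flp i x) τ) (hu : hexec σ u ≠ hexec τ u) :
    ∃ i', FinSupp i' ∧ outv S u (flp i' x) ≠ outv S u i' := by
  have hne : σ ≠ τ := by rintro rfl; exact hu rfl
  let R : Set Bit := {y | ∃ a b, Rd eSt σ y a b} ∪ {y | ∃ a b, Rd eSt τ y a b}
  have hR : R.Finite := (rd_finite eSt σ).union (rd_finite eSt τ)
  let i' : HInterp := fun r s => i r s && decide ((r, s) ∈ R)
  have hi' : ∀ y ∈ R, val i' y = val i y := by
    intro y hy
    have : (y.1, y.2) ∈ R := hy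
    simp [val, i', this]
  have hxR : x ∈ R := by
    obtain ⟨a, l, args, ρ, ρ', h1, h2, h3⟩ := runs_diverge hσ hτ hne
    exact Or.inl ⟨a, _, l, args, ρ, h1, h3⟩
  have r1 : RunsTo S i' σ := by
    refine ⟨hσ.1, (hAgrees_iff _ _).2 fun y a b h => ?_⟩
    rw [hi' y (Or.inl ⟨a, b, h⟩)]
    exact hσ.val h
  have r2 : RunsTo S (flp i' x) τ := by
    refine ⟨hτ.1, (hAgrees_iff _ _).2 fun y a b h => ?_⟩
    rw [← hτ.val h]
    by_cases hy : y = x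
    · subst hy
      rw [val_flp_self, val_flp_self, hi' _ hxR]
    · rw [val_flp_ne _ hy, val_flp_ne _ hy, hi' y (Or.inr ⟨a, b, h⟩)]
  refine ⟨i', Set.Finite.subset hR ?_, ?_⟩
  · intro y hy
    simp only [val, i', Set.mem_ofPred_eq, Bool.and_eq_true, decide_eq_true_eq] at hy
    exact hy.2
  · rw [outv, outv, r1.run_eq, r2.run_eq]
    exact hu.symm

/-! ### Predicates which never influence `u` -/

/-- Changing an interpretation at a predicate term of `r` never changes the final value of `u`. -/
def NP (S : Schema) (u r : ℕ) : Prop :=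
  ∀ i, FinT S i → ∀ s, outv S u (flp i (r, s)) = outv S u i

theorem exists_finSupp_of_not_NP {S : Schema} (hF : Free S) {u r : ℕ} (h : ¬ NP S u r) :
    ∃ i s, FinSupp i ∧ outv S u (flp i (r, s)) ≠ outv S u i := by
  simp only [NP, not_forall] at h
  obtain ⟨i, hi, s, hs⟩ := h
  obtain ⟨i', h1, h2⟩ := restrict_couple (u := u) (x := (r, s)) (run_spec hF hi)
    (run_spec hF (hi.flp _)) (fun h => hs h.symm)
  exact ⟨i', s, h1, h2⟩

open Classical in
/-- The interpretation `i` overwritten by `j` on a finite set of predicate terms. -/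
noncomputable def ovr (i j : HInterp) (ks : Finset Bit) : HInterp :=
  fun r s => if (r, s) ∈ ks then j r s else i r s

open Classical in
theorem ovr_insert (i j : HInterp) (x : Bit) (ks : Finset Bit) :
    ovr i j (insert x ks) = ovr i j ks ∨ ovr i j (insert x ks) = flp (ovr i j ks) x := by
  by_cases h : val (ovr i j ks) x = val j x
  · left
    apply hinterp_ext
    intro y
    by_cases hy : y = x
    · subst hy
      rw [h]
      simp [val, ovr]
    · simp [val, ovr, hy]
  · right
    apply hinterp_ext
    intro y
    by_cases hy : y = x
    · subst hy
      rw [val_flp_self]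
      have : val (ovr i j (insert y ks)) y = val j y := by simp [val, ovr]
      rw [this]
      cases h1 : val j y <;> cases h2 : val (ovr i j ks) y <;> simp_all
    · rw [val_flp_ne _ hy]
      simp [val, ovr, hy]

theorem ovr_outv {S : Schema} {u : ℕ} {i j : HInterp} (hi : FinT S i) (ks : Finset Bit)
    (hk : ∀ x ∈ ks, NP S u x.1) :
    FinT S (ovr i j ks) ∧ outv S u (ovr i j ks) = outv S u i := by
  classical
  induction ks using Finset.induction_on with
  | empty =>
    have : ovr i j ∅ = i := by funext r s; simp [ovr]
    rw [this]
    exact ⟨hi, rfl⟩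
  | insert x ks _ ih =>
    obtain ⟨h1, h2⟩ := ih fun y hy => hk y (Finset.mem_insert_of_mem hy)
    rcases ovr_insert i j x ks with h | h
    · rw [h]
      exact ⟨h1, h2⟩
    · rw [h]
      exact ⟨h1.flp x, (hk x (Finset.mem_insert_self _ _) _ h1 x.2).trans h2⟩

/-- The final value of `u` depends only on the predicates able to influence it. -/
theorem outv_congr {S : Schema} (hF : Free S) {u : ℕ} {i j : HInterp} (hi : FinT S i)
    (hj : FinT S j) (h : ∀ x : Bit, ¬ NP S u x.1 → val i x = val j x) :
    outv S u i = outv S u j := by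
  classical
  have hR := run_spec hF hj
  have hfin : {x : Bit | NP S u x.1 ∧ ∃ a b, Rd eSt (run S j) x a b}.Finite :=
    (rd_finite eSt (run S j)).subset fun x hx => hx.2
  obtain ⟨-, h2⟩ := ovr_outv (u := u) (j := j) hi hfin.toFinset
    (fun x hx => (hfin.mem_toFinset.1 hx).1)
  have hr : RunsTo S (ovr i j hfin.toFinset) (run S j) := by
    refine ⟨hR.1, (hAgrees_iff _ _).2 fun x a b hr => ?_⟩
    rw [← hR.val hr]
    by_cases hx : NP S u x.1
    · have : (x.1, x.2) ∈ hfin.toFinset := hfin.mem_toFinset.2 ⟨hx, a, b, hr⟩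
      simp only [val]
      rw [ovr, if_pos this]
    · have : (x.1, x.2) ∉ hfin.toFinset := fun hm => hx (hfin.mem_toFinset.1 hm).1
      have h3 := h x hx
      simp only [val] at h3 ⊢
      rw [← h3, ovr, if_neg this]
  rw [← h2, outv, outv, hr.run_eq]

/-! ### Liberality -/

theorem exists_path_of_prefix {S σ} (h : σ ∈ PrePaths S) : ∃ ρ, σ ++ ρ ∈ Paths S := by
  obtain ⟨τ, ⟨ρ, rfl⟩, h⟩ := h
  exact ⟨ρ, h⟩

theorem PrePaths.left {S σ τ} (h : σ ++ τ ∈ PrePaths S) : σ ∈ PrePaths S := by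
  obtain ⟨ρ, h⟩ := exists_path_of_prefix h
  exact ⟨_, ⟨τ ++ ρ, by simp⟩, h⟩

/-- In a free liberal schema, assignments at different positions of a path create different
terms. -/
theorem liberal_ne {S : Schema} (hF : Free S) (hL : Liberal S) {μ ν y f l args w g m brgs}
    (h : μ ++ Letter.asn y f l args :: (ν ++ [Letter.asn w g m brgs]) ∈ PrePaths S) :
    Trm.app f (args.map (hx eSt μ)) ≠
      Trm.app g (brgs.map (hx eSt (μ ++ Letter.asn y f l args :: ν))) := by
  obtain ⟨i, hi⟩ := hF _ h
  have := hL i μ ν y f l args w g m brgs h hi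
  have e : μ ++ Letter.asn y f l args :: (ν ++ [Letter.asn w g m brgs]) =
      (μ ++ Letter.asn y f l args :: ν) ++ [Letter.asn w g m brgs] := by simp
  rw [hexec_eq_hx, hexec_eq_hx, e, hx_append, hx_append _ _ [Letter.asn w g m brgs]] at this
  simpa using this

/-- A term created by an assignment after `α` is not the value of any variable after `α`. -/
theorem fresh_term {S : Schema} (hF : Free S) (hL : Liberal S) {α c w g m brgs}
    (h : α ++ (c ++ [Letter.asn w g m brgs]) ∈ PrePaths S) (z : ℕ) :
    hx eSt α z ≠ Trm.app g (brgs.map (hx eSt (α ++ c))) := by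
  rcases last_asn eSt α z with ⟨-, h1⟩ | ⟨a, f, l, args, d, rfl, h1, -⟩
  · rw [h1]
    simp [eSt]
  · rw [h1]
    have := liberal_ne hF hL (μ := a) (ν := d ++ c) (y := z) (f := f) (l := l) (args := args)
      (w := w) (g := g) (m := m) (brgs := brgs) (by simpa using h)
    simpa using this

theorem hx_injective {S : Schema} (hF : Free S) (hL : Liberal S) {γ} (h : γ ∈ PrePaths S)
    {x y : ℕ} (hxy : hx eSt γ x = hx eSt γ y) : x = y := by
  by_contra hne
  rcases last_asn eSt γ x with ⟨hx0, hx1⟩ | ⟨a, f, l, args, c, he, hx1, -⟩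
  · rcases last_asn eSt γ y with ⟨-, hy1⟩ | ⟨a', f', l', args', c', he', hy1, -⟩
    · rw [hx1, hy1] at hxy
      exact hne (by simpa [eSt] using hxy)
    · rw [hx1, hy1] at hxy
      simp [eSt] at hxy
  · rcases last_asn eSt γ y with ⟨-, hy1⟩ | ⟨a', f', l', args', c', he', hy1, -⟩
    · rw [hx1, hy1] at hxy
      simp [eSt] at hxy
    · rw [hx1, hy1] at hxy
      rcases List.append_eq_append_iff.1 (he.symm.trans he') with ⟨d, rfl, h2⟩ | ⟨d, rfl, h2⟩
      · cases d with
        | nil => simp at h2; exact hne h2.1.1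
        | cons L d =>
          simp only [List.cons_append, List.cons.injEq] at h2
          obtain ⟨rfl, -⟩ := h2
          refine liberal_ne hF hL (ν := d) (w := y) (m := l') ?_ hxy
          exact PrePaths.left (τ := c') (by rw [he'] at h; simpa using h)
      · cases d with
        | nil => simp at h2; exact hne h2.1.1.symm
        | cons L d =>
          simp only [List.cons_append, List.cons.injEq] at h2
          obtain ⟨rfl, -⟩ := h2
          refine liberal_ne hF hL (ν := d) (w := x) (m := l) ?_ hxy.symm
          exact PrePaths.left (τ := c) (by rw [he] at h; simpa using h)

theorem hx_snoc_ne {L : Letter} {x : ℕ} (h : ∀ f l args, L ≠ Letter.asn x f l args)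
    (d : ℕ → Trm) (σ : List Letter) : hx d (σ ++ [L]) x = hx d σ x := by
  rw [hx_append]
  cases L with
  | prd p l args b => rfl
  | asn y f l args =>
    have : x ≠ y := by rintro rfl; exact h f l args rfl
    simp [Function.update_of_ne this]

theorem hx_snoc_eq (d : ℕ → Trm) (σ : List Letter) (x f l args) :
    hx d (σ ++ [Letter.asn x f l args]) x = Trm.app f (args.map (hx d σ)) := by
  rw [hx_append]
  simp

/-- Coincidences between the values computed by two segments do not depend on the executable head
before them. -/
theorem coincide {S : Schema} (hF : Free S) (hL : Liberal S) {γ : List Letter} :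
    ∀ (n : ℕ) (a a' : List Letter), a.length + a'.length ≤ n → γ ++ a ∈ PrePaths S →
      γ ++ a' ∈ PrePaths S → ∀ x x', hx eSt (γ ++ a) x = hx eSt (γ ++ a') x' →
      ∀ d, hx d a x = hx d a' x' := by
  intro n
  induction n with
  | zero =>
    intro a a' hn h h' x x' he d
    have h1 : a = [] := List.length_eq_zero_iff.1 (by omega)
    have h2 : a' = [] := List.length_eq_zero_iff.1 (by omega)
    subst h1 h2
    exact congrArg d (hx_injective hF hL (by simpa using h) (by simpa using he))
  | succ n ih =>
    intro a a' hn h h' x x' he d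
    rcases List.eq_nil_or_concat' a with rfl | ⟨a0, L, rfl⟩
    · rcases List.eq_nil_or_concat' a' with rfl | ⟨a0', L', rfl⟩
      · exact congrArg d (hx_injective hF hL (by simpa using h) (by simpa using he))
      · rw [← List.append_assoc] at h' he
        by_cases hL' : ∃ f l args, L' = Letter.asn x' f l args
        · obtain ⟨f, l, args, rfl⟩ := hL'
          rw [hx_snoc_eq] at he
          exact (fresh_term hF hL (by simpa using h') x (by simpa using he)).elim
        · push Not at hL'
          rw [hx_snoc_ne hL'] at he ⊢
          exact ih [] a0' (by simp at hn ⊢; omega) h (PrePaths.left h') x x' he d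
    · rw [← List.append_assoc] at h he
      by_cases hL0 : ∃ f l args, L = Letter.asn x f l args
      · obtain ⟨f, l, args, rfl⟩ := hL0
        rw [hx_snoc_eq] at he
        rcases List.eq_nil_or_concat' a' with rfl | ⟨a0', L', rfl⟩
        · exact (fresh_term hF hL (by simpa using h) x' (by simpa using he.symm)).elim
        · rw [← List.append_assoc] at h' he
          by_cases hL' : ∃ f l args, L' = Letter.asn x' f l args
          · obtain ⟨f', l', args', rfl⟩ := hL'
            rw [hx_snoc_eq] at he
            rw [hx_snoc_eq, hx_snoc_eq]
            rw [Trm.app.injEq] at he ⊢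
            refine ⟨he.1, ?_⟩
            have he := he.2
            refine List.ext_getElem (by simpa using congrArg List.length he) ?_
            intro k hk hk'
            simp only [List.getElem_map]
            refine ih a0 a0' (by simp at hn; omega) (PrePaths.left h) (PrePaths.left h') _ _ ?_ d
            have : (args.map (hx eSt (γ ++ a0)))[k]? = (args'.map (hx eSt (γ ++ a0')))[k]? := by
              rw [he]
            simp only [List.length_map] at hk hk'
            simpa [hk, hk'] using this
          · push Not at hL'
            rw [hx_snoc_ne hL'] at he
            rw [hx_snoc_ne hL' d]
            exact ih _ a0' (by simp at hn ⊢; omega) (by simpa using h) (PrePaths.left h') x x'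
              (by rw [← List.append_assoc, hx_snoc_eq, he]) d
      · push Not at hL0
        rw [hx_snoc_ne hL0] at he
        rw [hx_snoc_ne hL0 d]
        exact ih a0 a' (by simp at hn ⊢; omega) (PrePaths.left h) h' x x' he d

theorem coincide_map {S : Schema} (hF : Free S) (hL : Liberal S) {γ a a' : List Letter}
    {args args' : List ℕ} (h : γ ++ a ∈ PrePaths S) (h' : γ ++ a' ∈ PrePaths S)
    (he : args.map (hx eSt (γ ++ a)) = args'.map (hx eSt (γ ++ a'))) (d : ℕ → Trm) :
    args.map (hx d a) = args'.map (hx d a') := by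
  refine List.ext_getElem (by simpa using congrArg List.length he) ?_
  intro k hk hk'
  simp only [List.getElem_map]
  refine coincide hF hL _ a a' le_rfl h h' _ _ ?_ d
  have : (args.map (hx eSt (γ ++ a)))[k]? = (args'.map (hx eSt (γ ++ a')))[k]? := by rw [he]
  simp only [List.length_map] at hk hk'
  simpa [hk, hk'] using this

/-! ### Dependence on the initial state -/

/-- The variable `y` occurs in the term `t`. -/
def Has (y : ℕ) (t : Trm) : Prop := ∃ F, IsVFTrm y F t

theorem has_var {y z : ℕ} : Has y (Trm.var z) ↔ y = z := by
  constructor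
  · rintro ⟨F, h⟩
    cases h
    rfl
  · rintro rfl
    exact ⟨[], .base⟩

theorem has_app {y f : ℕ} {ts : List Trm} : Has y (Trm.app f ts) ↔ ∃ t ∈ ts, Has y t := by
  constructor
  · rintro ⟨F, h⟩
    cases h with
    | step g hm h => exact ⟨_, hm, _, h⟩
  · rintro ⟨t, hm, F, h⟩
    exact ⟨_, .step f hm h⟩

/-- Two initial states give the same value of `x` after `μ` exactly when they agree on the
variables occurring in the term computed for `x`. -/
theorem hx_eq_iff (d d' : ℕ → Trm) (μ : List Letter) (x : ℕ) :
    hx d μ x = hx d' μ x ↔ ∀ y, Has y (hx eSt μ x) → d y = d' y := by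
  induction μ using List.reverseRecOn generalizing x with
  | nil => simp [eSt, has_var]
  | append_singleton μ L ih =>
    by_cases hL : ∃ f l args, L = Letter.asn x f l args
    · obtain ⟨f, l, args, rfl⟩ := hL
      rw [hx_snoc_eq, hx_snoc_eq, hx_snoc_eq]
      simp only [Trm.app.injEq, true_and, has_app, List.map_inj_left, ih]
      constructor
      · rintro h y ⟨t, ht, hy⟩
        obtain ⟨z, hz, rfl⟩ := List.mem_map.1 ht
        exact h z hz y hy
      · intro h z hz y hy
        exact h y ⟨_, List.mem_map.2 ⟨z, hz, rfl⟩, hy⟩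
    · push Not at hL
      rw [hx_snoc_ne hL, hx_snoc_ne hL, hx_snoc_ne hL]
      exact ih x

/-- Some two paths through a statement give different values to a variable assigned in it. -/
theorem distinguish {S T0 : Schema} (hF : Free S) (hL : Liberal S) (hI : IfPartsCondition S)
    (hPL : PredLinear S) (hO : Occurs T0 S) {p l args} (hP : PStmt T0 p l args) {α ν rest}
    (hν : ν ∈ Paths T0) (hp : α ++ (ν ++ rest) ∈ Paths S) {y : ℕ} (hy : AssignsTo T0 y) :
    ∃ ν₁ ∈ Paths T0, ∃ ν₂ ∈ Paths T0, hx eSt (α ++ ν₁) y ≠ hx eSt (α ++ ν₂) y := by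
  have hpre : ∀ ν' ∈ Paths T0, α ++ ν' ∈ PrePaths S := fun ν' h' =>
    ⟨_, ⟨rest, by simp⟩, link_replace hPL hO hP hν h' hp⟩
  -- A path assigning `y` gives it a term different from its value before the statement.
  have hfresh : ∀ ν' ∈ Paths T0, (∃ f l args, Letter.asn y f l args ∈ ν') →
      hx eSt (α ++ ν') y ≠ hx eSt α y := by
    rintro ν' h' ⟨f, l, args, hm⟩ he
    rcases last_asn (hx eSt α) ν' y with ⟨h0, -⟩ | ⟨a, f, l, args, c, rfl, h1, -⟩
    · exact h0 _ _ _ hm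
    · rw [hx_append, h1] at he
      refine fresh_term hF hL (α := α) (c := a) (w := y) (m := l) (g := f) (brgs := args) ?_ y ?_
      · exact PrePaths.left (τ := c) (by simpa using hpre _ h')
      · rw [← he, hx_append]
  obtain ⟨ν₁, h₁, f₁, l₁, args₁, hm₁⟩ := exists_path_assigning hy
  cases T0 with
  | skip => exact hP.elim
  | assign => exact hP.elim
  | seq => exact hP.elim
  | whil q m brgs B =>
    refine ⟨ν₁, h₁, [Letter.prd q m brgs false], while_false_mem _ _ _ _, ?_⟩
    rw [hx_append _ α [_]]
    exact hfresh _ h₁ ⟨_, _, _, hm₁⟩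
  | ite q m brgs t e =>
    -- A path through the other part either leaves `y` unchanged or assigns it with a different
    -- function symbol.
    have key : ∀ ν₂ ∈ Paths (Schema.ite q m brgs t e),
        (∀ f, (∃ l args, Letter.asn y f l args ∈ ν₁) → (∃ l args, Letter.asn y f l args ∈ ν₂) →
          False) → hx eSt (α ++ ν₁) y ≠ hx eSt (α ++ ν₂) y := by
      intro ν₂ h₂ hff
      rcases last_asn (hx eSt α) ν₂ y with ⟨h0, he⟩ | ⟨a, f, l, args, c, rfl, he, -⟩
      · rw [hx_append _ α ν₂, he]
        exact hfresh _ h₁ ⟨_, _, _, hm₁⟩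
      · rcases last_asn (hx eSt α) ν₁ y with ⟨h0, -⟩ | ⟨a', f', l', args', c', rfl, he', -⟩
        · exact (h0 _ _ _ hm₁).elim
        · rw [hx_append, hx_append _ α, he, he']
          intro h
          rw [Trm.app.injEq] at h
          obtain ⟨rfl, -⟩ := h
          exact hff f' ⟨l', args', by simp⟩ ⟨l, args, by simp⟩
    rcases h₁ with ⟨x, hx, rfl⟩ | ⟨x, hx, rfl⟩
    · obtain ⟨z, hz⟩ := paths_nonempty e
      refine ⟨_, Or.inl ⟨x, hx, rfl⟩, _, Or.inr ⟨z, hz, rfl⟩, key _ (Or.inr ⟨z, hz, rfl⟩) ?_⟩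
      rintro f ⟨l1, a1, hm1⟩ ⟨l2, a2, hm2⟩
      exact hI _ _ _ _ _ hO f y (assignsWith_of_mem hx (by simpa using hm1))
        (assignsWith_of_mem hz (by simpa using hm2))
    · obtain ⟨z, hz⟩ := paths_nonempty t
      refine ⟨_, Or.inr ⟨x, hx, rfl⟩, _, Or.inl ⟨z, hz, rfl⟩, key _ (Or.inl ⟨z, hz, rfl⟩) ?_⟩
      rintro f ⟨l1, a1, hm1⟩ ⟨l2, a2, hm2⟩
      exact hI _ _ _ _ _ hO f y (assignsWith_of_mem hz (by simpa using hm2))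
        (assignsWith_of_mem hx (by simpa using hm1))

/-! ### Predicates fed by a statement -/

/-- The argument vector `args`, evaluated after the segment `μ`, depends on the initial value of
some variable assigned in the statement `T0`. -/
def VDep (T0 : Schema) (μ : List Letter) (args : List ℕ) : Prop :=
  ∃ y, AssignsTo T0 y ∧ ∃ x ∈ args, Has y (hx eSt μ x)

/-- Every letter of `μ` whose predicate can influence `u` and whose arguments depend on `T0`
carries the value `false`. -/
def Good (S : Schema) (u : ℕ) (T0 : Schema) (μ : List Letter) : Prop :=
  ∀ a r l args b ρ, μ = a ++ Letter.prd r l args b :: ρ → ¬ NP S u r → VDep T0 a args → b = false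

/-- The predicate `r` can influence `u` and is fed by `T0` along a segment `μ` which is `Good`. -/
def UP (S : Schema) (u : ℕ) (T0 : Schema) (r : ℕ) : Prop :=
  ¬ NP S u r ∧ ∃ α ν μ l args b rest, ν ∈ Paths T0 ∧
    α ++ (ν ++ (μ ++ Letter.prd r l args b :: rest)) ∈ Paths S ∧ Good S u T0 μ ∧ VDep T0 μ args

/-- All letters of `ρ` with a predicate satisfying `UP` carry the value `false`. -/
def UFalse (S : Schema) (u : ℕ) (T0 : Schema) (ρ : List Letter) : Prop :=
  ∀ r l args b, Letter.prd r l args b ∈ ρ → UP S u T0 r → b = false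

theorem Good.left {S u T0 μ μ'} (h : Good S u T0 (μ ++ μ')) : Good S u T0 μ := by
  rintro a r l args b ρ rfl
  exact h a r l args b (ρ ++ μ') (by simp)

theorem indep_map {T0 : Schema} {c : List Letter} {args : List ℕ} (h : ¬ VDep T0 c args)
    {d d' : ℕ → Trm} (hd : ∀ z, ¬ AssignsTo T0 z → d z = d' z) :
    args.map (hx d c) = args.map (hx d' c) := by
  refine List.map_congr_left fun x hx => ?_
  rw [hx_eq_iff]
  intro y hy
  exact hd y fun h1 => h ⟨y, h1, x, hx, hy⟩

theorem exists_UP {S : Schema} {u : ℕ} {T0 : Schema} {α ν : List Letter} (hν : ν ∈ Paths T0) :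
    ∀ (n : ℕ) (μ : List Letter) (r l : ℕ) (args : List ℕ) (b : Bool) (rest : List Letter),
      μ.length = n → α ++ (ν ++ (μ ++ Letter.prd r l args b :: rest)) ∈ Paths S →
      ¬ NP S u r → VDep T0 μ args → ∃ r, UP S u T0 r := by
  intro n
  induction n using Nat.strong_induction_on with
  | _ n ih =>
  intro μ r l args b rest hn hp hr hd
  by_cases hg : Good S u T0 μ
  · exact ⟨r, hr, α, ν, μ, l, args, b, rest, hν, hp, hg, hd⟩
  · simp only [Good, not_forall] at hg
    obtain ⟨a, r', l', args', b', ρ, rfl, hr', hd', -⟩ := hg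
    refine ih a.length (by simp at hn; omega) a r' l' args' b' (ρ ++ Letter.prd r l args b :: rest)
      rfl (by simpa using hp) hr' hd'

/-- The segment witnessing `UP` may be chosen such that no earlier occurrence of `q` on it is fed
by `T0`. -/
theorem UP.choice {S : Schema} {u : ℕ} {T0 : Schema} {q : ℕ} (h : UP S u T0 q) :
    ∃ α ν μ l args b rest, ν ∈ Paths T0 ∧
      α ++ (ν ++ (μ ++ Letter.prd q l args b :: rest)) ∈ Paths S ∧ Good S u T0 μ ∧
      VDep T0 μ args ∧
      ∀ a l' args' b' ρ, μ = a ++ Letter.prd q l' args' b' :: ρ → ¬ VDep T0 a args' := by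
  obtain ⟨-, α, ν, μ, l, args, b, rest, hν, hp, hg, hd⟩ := h
  generalize hn : μ.length = n
  induction n using Nat.strong_induction_on generalizing μ l args b rest with
  | _ n ih =>
  by_cases hc : ∀ a l' args' b' ρ, μ = a ++ Letter.prd q l' args' b' :: ρ → ¬ VDep T0 a args'
  · exact ⟨α, ν, μ, l, args, b, rest, hν, hp, hg, hd, hc⟩
  · simp only [not_forall, not_not] at hc
    obtain ⟨a, l', args', b', ρ, rfl, hd'⟩ := hc
    exact ih a.length (by simp at hn; omega) a l' args' b' (ρ ++ Letter.prd q l args b :: rest)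
      (by simpa using hp) hg.left hd' rfl

open Classical in
/-- If `p` cannot influence `u`, then neither can any predicate in the statement of `p`: fixing
the value of `p` so that the part containing that predicate is never entered is harmless. -/
theorem np_of_stmt {S T0 : Schema} (hF : Free S) (hPL : PredLinear S) {u p l : ℕ}
    {args : List ℕ} (hO : Occurs T0 S) (hP : PStmt T0 p l args) (hp : NP S u p) {r : ℕ}
    (hr : 1 ≤ predCount T0 r) : NP S u r := by
  by_cases hrp : r = p
  · rw [hrp]; exact hp
  have hB : ∃ B : Bool, (B = true → ¬ IsW S p) ∧
      ∀ ρ ∈ PathsL (Rst T0 B), ∀ l args b, Letter.prd r l args b ∉ ρ := by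
    have hle := hO.predCount_le r
    have hl := hPL r
    cases T0 with
    | skip => exact hP.elim
    | assign => exact hP.elim
    | seq => exact hP.elim
    | whil q m brgs B =>
      refine ⟨false, by simp, ?_⟩
      intro ρ hρ l args b hm
      have : ρ = [] := hρ
      simp [this] at hm
    | ite q m brgs t e =>
      have hqr : q ≠ r := by rintro rfl; exact hrp hP.1
      simp only [predCount, if_neg hqr] at hr hle
      by_cases ht : 1 ≤ predCount t r
      · refine ⟨false, by simp, fun ρ hρ l args b hm => ?_⟩
        have := predCount_of_mem (pathsL_singleton.1 hρ) hm
        omega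
      · refine ⟨true, ?_, fun ρ hρ l args b hm => ?_⟩
        · rintro - ⟨l', args', B, hO'⟩
          obtain ⟨K, hK⟩ := hO.cont
          obtain ⟨K', hK'⟩ := hO'.cont
          have := (cont_unique hK (hPL p) hP hK' ⟨rfl, rfl, rfl⟩).1
          simp at this
        · exact ht (predCount_of_mem (pathsL_singleton.1 hρ) hm)
  obtain ⟨B, hB1, hB2⟩ := hB
  intro i hi s
  let j : HInterp := fun r' s => if r' = p then B else i r' s
  have hj : FinT S j := by
    refine Set.Finite.subset hi ?_
    rintro x ⟨h1, h2⟩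
    by_cases hx : x.1 = p
    · simp only [val, j, hx, if_true] at h2
      rw [hx] at h1
      exact (hB1 h2 h1).elim
    · simp only [val, j, hx, if_false] at h2
      exact ⟨h1, h2⟩
  have hij : ∀ x : Bit, ¬ NP S u x.1 → val i x = val j x := by
    intro x hx
    have : x.1 ≠ p := by rintro h; rw [h] at hx; exact hx hp
    simp [val, j, this]
  have e1 := outv_congr hF hi hj hij
  have e2 : outv S u (flp i (r, s)) = outv S u (flp j (r, s)) := by
    refine outv_congr hF (hi.flp _) (hj.flp _) fun x hx => ?_
    by_cases h : x = (r, s)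
    · rw [h, val_flp_self, val_flp_self, hij _ (h ▸ hx)]
    · rw [val_flp_ne _ h, val_flp_ne _ h, hij _ hx]
  rw [e1, e2]
  by_contra hne
  obtain ⟨a, m, brgs, ρ, ρ', h1, -, -⟩ := sens_read hF hj hne
  have hR := run_spec hF hj
  obtain ⟨a', τ, c, h2, hτ, hm⟩ := inside_stmt hO (hPL r) hr hR.1
    (l := m) (args := brgs) (b := val j (r, s)) (by rw [h1]; simp)
  obtain ⟨b, ρ₁, hρ₁, rfl⟩ := pstmt_paths_cases hP hτ
  have hb := hR.val (by rw [h2]; exact rd_intro eSt a' p l args b (ρ₁ ++ c))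
  have : b = B := by simpa [val, j] using hb.symm
  subst this
  rcases List.mem_cons.1 hm with hm | hm
  · simp at hm
    exact hrp hm.1
  · exact hB2 _ hρ₁ _ _ _ hm

/-! ### Couples and their transport to other heads -/

/-- The interpretations `i` and `i` changed at the predicate term of `q` evaluated after `γ` form
a couple with head `γ` and tails `ρ` (where the term is false) and `ρ'` (where it is true). -/
structure FamAt (S : Schema) (u q l : ℕ) (args : List ℕ) (γ ρ ρ' : List Letter) (i : HInterp) :
    Prop where
  fst : RunsTo S i (γ ++ Letter.prd q l args false :: ρ)
  snd : RunsTo S (flp i (q, args.map (hx eSt γ))) (γ ++ Letter.prd q l args true :: ρ')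
  diff : hx eSt (γ ++ Letter.prd q l args false :: ρ) u ≠
    hx eSt (γ ++ Letter.prd q l args true :: ρ') u

theorem prePaths_of_path {S σ τ} (h : σ ++ τ ∈ Paths S) : σ ∈ PrePaths S :=
  ⟨_, ⟨τ, rfl⟩, h⟩

open Classical in
/-- The tails of a couple form a couple after any other head leading to the same predicate, with
an interpretation true only where one of the two runs evaluates a predicate to `true`. -/
theorem FamAt.transport {S : Schema} (hF : Free S) (hL : Liberal S) (hPL : PredLinear S)
    {u q l args γ ρ ρ' i} (h : FamAt S u q l args γ ρ ρ' i) {γ' l' args' b rest}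
    (hγ' : γ' ++ Letter.prd q l' args' b :: rest ∈ Paths S) :
    l' = l ∧ args' = args ∧ ∃ i', FinSupp i' ∧ FamAt S u q l args γ' ρ ρ' i' ∧
      ∀ x, val i' x = true → x ≠ (q, args.map (hx eSt γ')) ∧
        ((∃ a, Rd eSt (γ' ++ Letter.prd q l args false :: ρ) x a true) ∨
         (∃ a, Rd eSt (γ' ++ Letter.prd q l args true :: ρ') x a true)) := by
  obtain ⟨rfl, rfl, pF⟩ := swap_path hPL h.fst.1 hγ'
  obtain ⟨-, -, pT⟩ := swap_path hPL h.snd.1 hγ'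
  refine ⟨rfl, rfl, ?_⟩
  set X : Bit := (q, args'.map (hx eSt γ')) with hX
  set AF := γ' ++ Letter.prd q l' args' false :: ρ with hAF
  set AT := γ' ++ Letter.prd q l' args' true :: ρ' with hAT
  have rF : Rd eSt AF X γ' false := rd_intro _ _ _ _ _ _ _
  have rT : Rd eSt AT X γ' true := rd_intro _ _ _ _ _ _ _
  -- No term is evaluated differently along the two paths, except at the divergence.
  have key : ∀ x a a' bb, Rd eSt AF x a bb → Rd eSt AT x a' (!bb) → x = X := by
    intro x a a' bb h1 h2
    rcases rd_append (σ := γ') h1 with h3 | ⟨c, rfl, h3⟩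
    · have := (read_once hF pT (rd_append_left h3 _) h2).2
      simp at this
    rcases rd_append (σ := γ') h2 with h4 | ⟨c', rfl, h4⟩
    · have := (read_once hF pF (rd_append_left h4 _) h1).2
      simp at this
    rcases rd_prd_cons h3 with ⟨-, rfl, -⟩ | ⟨c, rfl, h5⟩
    · rfl
    rcases rd_prd_cons h4 with ⟨-, rfl, -⟩ | ⟨c', rfl, h6⟩
    · rfl
    exfalso
    obtain ⟨m1, brgs1, ρ1, rfl, e1⟩ := h5
    obtain ⟨m2, brgs2, ρ2, rfl, e2⟩ := h6
    have he := coincide_map hF hL (γ := γ') (a := Letter.prd q l' args' false :: c)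
      (a' := Letter.prd q l' args' true :: c') (args := brgs1) (args' := brgs2)
      (prePaths_of_path (τ := Letter.prd x.1 m1 brgs1 bb :: ρ1) (by rw [hAF] at pF; simpa using pF))
      (prePaths_of_path (τ := Letter.prd x.1 m2 brgs2 (!bb) :: ρ2)
        (by rw [hAT] at pT; simpa using pT))
      (by rw [hx_append, hx_append]; simp only [hx_prd_cons]; rw [← e1, ← e2]) (hx eSt γ)
    simp only [hx_prd_cons] at he
    have k1 : Rd eSt (γ ++ Letter.prd q l' args' false :: (c ++ Letter.prd x.1 m1 brgs1 bb :: ρ1))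
        (x.1, brgs1.map (hx (hx eSt γ) c)) (γ ++ Letter.prd q l' args' false :: c) bb :=
      rd_append_right (σ := γ) ⟨m1, brgs1, ρ1, by simp, by simp⟩
    have k2 : Rd eSt (γ ++ Letter.prd q l' args' true :: (c' ++ Letter.prd x.1 m2 brgs2 (!bb) :: ρ2))
        (x.1, brgs1.map (hx (hx eSt γ) c)) (γ ++ Letter.prd q l' args' true :: c') (!bb) :=
      rd_append_right (σ := γ) ⟨m2, brgs2, ρ2, by simp, by simpa using he⟩
    have v1 := h.fst.val k1
    have v2 := h.snd.val k2
    by_cases hxx : ((x.1, brgs1.map (hx (hx eSt γ) c)) : Bit) = (q, args'.map (hx eSt γ))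
    · rw [hxx] at k1
      have := (read_once hF h.fst.1 k1 (rd_intro eSt γ q l' args' false _)).1
      simp at this
    · rw [val_flp_ne _ hxx, v1] at v2
      simp at v2
  let i' : HInterp := fun r s => decide ((r, s) ≠ X ∧
    ((∃ a, Rd eSt AF (r, s) a true) ∨ ∃ a, Rd eSt AT (r, s) a true))
  have hi' : ∀ x, val i' x = true ↔ x ≠ X ∧
      ((∃ a, Rd eSt AF x a true) ∨ ∃ a, Rd eSt AT x a true) := by
    intro x
    simp only [val, i', decide_eq_true_eq]
  have hi'f : ∀ x, val i' x = false ↔ ¬ (x ≠ X ∧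
      ((∃ a, Rd eSt AF x a true) ∨ ∃ a, Rd eSt AT x a true)) := by
    intro x
    rw [← hi', Bool.not_eq_true]
  refine ⟨i', ?_, ⟨⟨pF, ?_⟩, ⟨pT, ?_⟩, ?_⟩, fun x hx => (hi' x).1 hx⟩
  · refine Set.Finite.subset ((rd_finite eSt AF).union (rd_finite eSt AT)) ?_
    intro x hx
    rcases ((hi' x).1 hx).2 with ⟨a, h⟩ | ⟨a, h⟩
    · exact Or.inl ⟨a, true, h⟩
    · exact Or.inr ⟨a, true, h⟩
  · rw [hAgrees_iff]
    intro x a bb hr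
    cases bb with
    | true =>
      rw [hi']
      refine ⟨?_, Or.inl ⟨a, hr⟩⟩
      rintro rfl
      have := (read_once hF pF hr rF).2
      simp at this
    | false =>
      rw [hi'f]
      rintro ⟨hne, ⟨a', h'⟩ | ⟨a', h'⟩⟩
      · have := (read_once hF pF hr h').2
        simp at this
      · exact hne (key x a a' false hr h')
  · rw [hAgrees_iff]
    intro x a bb hr
    by_cases hx : x = X
    · subst hx
      have h1 := (read_once hF pT hr rT).2
      rw [h1, val_flp_self]
      have : val i' X = false := by rw [hi'f]; exact fun h => h.1 rfl
      rw [this]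
      rfl
    · rw [val_flp_ne _ hx]
      cases bb with
      | true => exact (hi' x).2 ⟨hx, Or.inr ⟨a, hr⟩⟩
      | false =>
        rw [hi'f]
        rintro ⟨hne, ⟨a', h'⟩ | ⟨a', h'⟩⟩
        · exact hne (key x a' a true h' hr)
        · have := (read_once hF pT hr h').2
          simp at this
  · intro he
    apply h.diff
    have := coincide hF hL _ _ _ le_rfl (prePaths_of_path (τ := []) (by simpa using pF))
      (prePaths_of_path (τ := []) (by simpa using pT)) u u he (hx eSt γ)
    rw [hx_append, hx_append]
    exact this

/-! ### A couple whose tails make all fed predicates false -/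

/-- The true predicate terms of fed predicates which are not evaluated along `γ`. -/
def Pend (S : Schema) (u : ℕ) (T0 : Schema) (i : HInterp) (γ : List Letter) : Set Bit :=
  {e | UP S u T0 e.1 ∧ val i e = true ∧ ¬ ∃ c b, Rd eSt γ e c b}

theorem sens_at {S : Schema} (hF : Free S) {i : HInterp} (hi : FinT S i) {x : Bit} {u : ℕ}
    (hs : outv S u (flp i x) ≠ outv S u i) {γ b} (hγ : Rd eSt (run S i) x γ b) :
    ∃ l args ρ ρ', run S i = γ ++ Letter.prd x.1 l args (val i x) :: ρ ∧
      run S (flp i x) = γ ++ Letter.prd x.1 l args (!val i x) :: ρ' ∧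
      x.2 = args.map (hx eSt γ) := by
  obtain ⟨a, l, args, ρ, ρ', h1, h2, h3⟩ := sens_read hF hi hs
  have := (read_once hF (run_spec hF hi).1 hγ ⟨l, args, ρ, h1, h3⟩).1
  subst this
  exact ⟨l, args, ρ, ρ', h1, h2, h3⟩

theorem hAgrees_left {i σ τ} (h : hAgrees i (σ ++ τ)) : hAgrees i σ := by
  rw [hAgrees_iff] at h ⊢
  exact fun x a b hr => h x a b (rd_append_left hr τ)

theorem read_of_mem {d : ℕ → Trm} {σ : List Letter} {r l args b}
    (h : Letter.prd r l args b ∈ σ) : ∃ c, Rd d σ (r, args.map (hx d c)) c b := by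
  obtain ⟨c, ρ, rfl⟩ := List.append_of_mem h
  exact ⟨c, rd_intro _ _ _ _ _ _ _⟩

/-- Starting from a couple for a fed predicate, true terms of fed predicates not evaluated in the
head are made false one at a time, moving the couple to one of these terms when necessary. -/
theorem descent {S : Schema} (hF : Free S) {u : ℕ} {T0 : Schema} :
    ∀ (n : ℕ) (i : HInterp) (γ : List Letter) (x : Bit) (b : Bool), FinSupp i →
      (Pend S u T0 i γ).ncard = n → UP S u T0 x.1 → outv S u (flp i x) ≠ outv S u i →
      Rd eSt (run S i) x γ b →
      ∃ q l args γ ρ ρ' i, UP S u T0 q ∧ FamAt S u q l args γ ρ ρ' i ∧ UFalse S u T0 ρ ∧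
        UFalse S u T0 ρ' := by
  intro n
  induction n using Nat.strong_induction_on with
  | _ n ih =>
  intro i γ x b hi hn hU hs hγ
  have hR := run_spec hF (S := S) hi.finT
  have hR' := run_spec hF (S := S) (hi.flp x).finT
  obtain ⟨l, args, ρ, ρ', e1, e2, e3⟩ := sens_at hF hi.finT hs hγ
  have hxe : x = (x.1, args.map (hx eSt γ)) := Prod.ext rfl e3
  have rd1 : Rd eSt (run S i) x γ (val i x) := ⟨l, args, ρ, e1, e3⟩
  have rd2 : Rd eSt (run S (flp i x)) x γ (!val i x) := ⟨l, args, ρ', e2, e3⟩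
  have hxγ : ¬ ∃ c b, Rd eSt γ x c b := by
    rintro ⟨c, b', h⟩
    have h1 : Rd eSt (run S i) x c b' := by rw [e1]; exact rd_append_left h _
    have h2 := (read_once hF hR.1 h1 rd1).1
    subst h2
    exact lt_irrefl _ (rd_lt h)
  have hfin : (Pend S u T0 i γ).Finite := hi.subset fun e he => he.2.1
  have hdec : ∀ i' γ' e, e ∈ Pend S u T0 i γ → e ∉ Pend S u T0 i' γ' →
      Pend S u T0 i' γ' ⊆ Pend S u T0 i γ → (Pend S u T0 i' γ').ncard < n := by
    intro i' γ' e h1 h2 h3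
    rw [← hn]
    exact Set.ncard_lt_ncard ⟨h3, fun h => h2 (h h1)⟩ hfin
  rcases Set.eq_empty_or_nonempty (Pend S u T0 i γ) with hE | ⟨e, he⟩
  · have hx0 : val i x = false := by
      by_contra h
      rw [Bool.not_eq_false] at h
      have : x ∈ Pend S u T0 i γ := ⟨hU, h, hxγ⟩
      rw [hE] at this
      exact this
    rw [hx0] at e1 e2 rd1 rd2
    have hmem : ∀ e : Bit, UP S u T0 e.1 → val i e = true → ∃ c b, Rd eSt γ e c b := by
      intro e h1 h2
      by_contra h3
      have : e ∈ Pend S u T0 i γ := ⟨h1, h2, h3⟩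
      rw [hE] at this
      exact this
    refine ⟨x.1, l, args, γ, ρ, ρ', i, hU, ⟨e1 ▸ hR, ?_, ?_⟩, ?_, ?_⟩
    · rw [← hxe]
      rw [e2] at hR'
      exact hR'
    · intro h
      apply hs
      rw [outv, outv, hexec_eq_hx, hexec_eq_hx, e1, e2]
      exact h.symm
    · intro r m brgs bb hm hr
      by_contra hbb
      rw [Bool.not_eq_false] at hbb
      subst hbb
      obtain ⟨c, hc⟩ := read_of_mem (d := hx eSt (γ ++ [Letter.prd x.1 l args false])) hm
      have hc := rd_append_right hc
      rw [List.append_assoc, List.singleton_append, ← e1] at hc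
      obtain ⟨c', b', h'⟩ := hmem _ hr (hR.val hc)
      have h2 := rd_append_left h' (Letter.prd x.1 l args false :: ρ)
      rw [← e1] at h2
      have := (read_once hF hR.1 hc h2).1
      have h3 := rd_lt h'
      rw [← this] at h3
      simp at h3
    · intro r m brgs bb hm hr
      by_contra hbb
      rw [Bool.not_eq_false] at hbb
      subst hbb
      obtain ⟨c, hc⟩ := read_of_mem (d := hx eSt (γ ++ [Letter.prd x.1 l args true])) hm
      have hc := rd_append_right hc
      rw [List.append_assoc, List.singleton_append] at hc
      simp only [Bool.not_false] at e2
      rw [← e2] at hc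
      have hv := hR'.val hc
      rw [val_flp_ne] at hv
      · obtain ⟨c', b', h'⟩ := hmem _ hr hv
        have h2 := rd_append_left h' (Letter.prd x.1 l args true :: ρ')
        rw [← e2] at h2
        have := (read_once hF hR'.1 hc h2).1
        have h3 := rd_lt h'
        rw [← this] at h3
        simp at h3
      · intro hx
        rw [hx] at hc
        have := (read_once hF hR'.1 hc rd2).1
        simp at this
  · by_cases hex : e = x
    · subst hex
      refine ih _ (hdec (flp i e) γ e he ?_ ?_) (flp i e) γ e _ (hi.flp e) rfl hU ?_ rd2
      · rintro ⟨-, h, -⟩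
        rw [val_flp_self, he.2.1] at h
        simp at h
      · rintro y ⟨h1, h2, h3⟩
        by_cases hy : y = e
        · rw [hy]; exact he
        · rw [val_flp_ne _ hy] at h2
          exact ⟨h1, h2, h3⟩
      · rw [flp_flp]
        exact hs.symm
    · -- Reads of `e` in either run happen after the divergence at `x`.
      have after : ∀ (c ρ₀ : List Letter) (b₀ b' : Bool),
          Rd eSt (γ ++ Letter.prd x.1 l args b₀ :: ρ₀) e c b' →
          ∃ c', c = γ ++ Letter.prd x.1 l args b₀ :: c' := by
        intro c ρ₀ b₀ b' h
        rcases rd_append h with h2 | ⟨c1, rfl, h2⟩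
        · exact (he.2.2 ⟨_, _, h2⟩).elim
        · rcases rd_prd_cons h2 with ⟨-, h3, -⟩ | ⟨c2, rfl, -⟩
          · exact (hex (h3.trans hxe.symm)).elim
          · exact ⟨c2, rfl⟩
      by_cases h1 : outv S u (flp (flp i e) x) = outv S u (flp i e)
      · by_cases h2 : outv S u (flp i e) = outv S u i
        · have h3 : outv S u (flp (flp i x) e) ≠ outv S u (flp i x) := by
            rw [flp_comm, h1, h2]
            exact hs.symm
          obtain ⟨c, m, brgs, κ, κ', k1, k2, k3⟩ := sens_read hF (hi.flp x).finT h3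
          obtain ⟨c', rfl⟩ := after c ρ' _ _ (by rw [← e2]; exact ⟨m, brgs, κ, k1, k3⟩)
          refine ih _ (hdec (flp (flp i x) e) _ e he ?_ ?_) (flp (flp i x) e) _ e _
            ((hi.flp x).flp e) rfl he.1 (by rw [flp_flp]; exact h3.symm) ⟨m, brgs, κ', k2, k3⟩
          · rintro ⟨-, h, -⟩
            rw [val_flp_self, val_flp_ne _ hex, he.2.1] at h
            simp at h
          · rintro y ⟨f1, f2, f3⟩
            have hye : y ≠ e := by
              rintro rfl
              rw [val_flp_self, val_flp_ne _ hex, he.2.1] at f2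
              simp at f2
            have hyx : y ≠ x := by
              intro h
              rw [h] at f3
              exact f3 ⟨γ, _, l, args, c', rfl, e3⟩
            rw [val_flp_ne _ hye, val_flp_ne _ hyx] at f2
            exact ⟨f1, f2, fun ⟨d, b', h⟩ => f3 ⟨d, b', rd_append_left h _⟩⟩
        · obtain ⟨c, m, brgs, κ, κ', k1, k2, k3⟩ := sens_read hF hi.finT h2
          obtain ⟨c', rfl⟩ := after c ρ _ _ (by rw [← e1]; exact ⟨m, brgs, κ, k1, k3⟩)
          refine ih _ (hdec (flp i e) _ e he ?_ ?_) (flp i e) _ e _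
            (hi.flp e) rfl he.1 (by rw [flp_flp]; exact Ne.symm h2) ⟨m, brgs, κ', k2, k3⟩
          · rintro ⟨-, h, -⟩
            rw [val_flp_self, he.2.1] at h
            simp at h
          · rintro y ⟨f1, f2, f3⟩
            have hye : y ≠ e := by
              rintro rfl
              rw [val_flp_self, he.2.1] at f2
              simp at f2
            rw [val_flp_ne _ hye] at f2
            exact ⟨f1, f2, fun ⟨d, b', h⟩ => f3 ⟨d, b', rd_append_left h _⟩⟩
      · have hag : hAgrees (flp i e) γ := by
          rw [hAgrees_iff]
          intro y a b' hr
          have : y ≠ e := by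
            rintro rfl
            exact he.2.2 ⟨a, b', hr⟩
          rw [val_flp_ne _ this]
          exact hR.val (by rw [e1]; exact rd_append_left hr _)
        obtain ⟨b', hb'⟩ := read_of_head hF (hi.flp e).finT (e1 ▸ hR.1) hag
        rw [← hxe] at hb'
        refine ih _ (hdec (flp i e) γ e he ?_ ?_) (flp i e) γ x b' (hi.flp e) rfl hU h1 hb'
        · rintro ⟨-, h, -⟩
          rw [val_flp_self, he.2.1] at h
          simp at h
        · rintro y ⟨f1, f2, f3⟩
          have hye : y ≠ e := by
            rintro rfl
            rw [val_flp_self, he.2.1] at f2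
            simp at f2
          rw [val_flp_ne _ hye] at f2
          exact ⟨f1, f2, f3⟩

/-! ### Replacing the path through the statement of `p` -/

theorem rd_mem {d σ x a b} (h : Rd d σ x a b) : ∃ l args, Letter.prd x.1 l args b ∈ σ := by
  obtain ⟨l, args, ρ, rfl, -⟩ := h
  exact ⟨l, args, by simp⟩

theorem rd_three {α ν β x a b} (h : Rd eSt (α ++ (ν ++ β)) x a b) :
    Rd eSt α x a b ∨ (∃ l args, Letter.prd x.1 l args b ∈ ν) ∨
      ∃ c, a = α ++ (ν ++ c) ∧ Rd (hx eSt (α ++ ν)) β x c b := by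
  rcases rd_append h with h1 | ⟨c, rfl, h1⟩
  · exact Or.inl h1
  · rcases rd_append h1 with h2 | ⟨c', rfl, h2⟩
    · exact Or.inr (Or.inl (rd_mem h2))
    · refine Or.inr (Or.inr ⟨c', rfl, ?_⟩)
      rwa [hx_append]

theorem rd_three_intro {α ν β x c b} (h : Rd (hx eSt (α ++ ν)) β x c b) :
    Rd eSt (α ++ (ν ++ β)) x (α ++ (ν ++ c)) b := by
  have := rd_append_right h
  simpa using this

/-- Changing the initial values of the variables assigned in `T0` only changes the predicate terms
of letters fed by `T0`. -/
theorem rd_shift {T0 : Schema} {d d' : ℕ → Trm} (hd : ∀ z, ¬ AssignsTo T0 z → d z = d' z)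
    {β x c b} (h : Rd d β x c b) :
    Rd d' β x c b ∨ ∃ l args ρ, β = c ++ Letter.prd x.1 l args b :: ρ ∧ VDep T0 c args := by
  obtain ⟨l, args, ρ, e, hx⟩ := h
  by_cases hv : VDep T0 c args
  · exact Or.inr ⟨l, args, ρ, e, hv⟩
  · exact Or.inl ⟨l, args, ρ, e, by rw [hx, indep_map hv hd]⟩

/-- Along a good segment to `q`, followed by `q` being false and a tail on which fed predicates are
false, every letter fed by `T0` and able to influence `u` is false. -/
theorem all_fed_false {S : Schema} {u : ℕ} {T0 : Schema} {α ν μ ρ : List Letter} {q l : ℕ}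
    {args : List ℕ} (hν : ν ∈ Paths T0)
    (hp : α ++ (ν ++ (μ ++ Letter.prd q l args false :: ρ)) ∈ Paths S)
    (hg : Good S u T0 μ) (hρ : UFalse S u T0 ρ) :
    ∀ (n : ℕ) (c : List Letter) (r m : ℕ) (brgs : List ℕ) (b : Bool) (κ : List Letter),
      c.length = n → μ ++ Letter.prd q l args false :: ρ = c ++ Letter.prd r m brgs b :: κ →
      ¬ NP S u r → VDep T0 c brgs → b = false := by
  intro n
  induction n using Nat.strong_induction_on with
  | _ n ih =>
  intro c r m brgs b κ hn he hr hd
  have hc : Good S u T0 c := by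
    rintro a r' m' brgs' b' ρ' rfl hr' hd'
    exact ih a.length (by simp at hn; omega) a r' m' brgs' b' _ rfl
      (he.trans (List.append_assoc _ _ _)) hr' hd'
  have hU : UP S u T0 r := ⟨hr, α, ν, c, m, brgs, b, κ, hν, he ▸ hp, hc, hd⟩
  rcases List.append_eq_append_iff.1 he with ⟨c', rfl, h2⟩ | ⟨a', rfl, h2⟩
  · cases c' with
    | nil =>
      simp at h2
      exact h2.1.2.2.2
    | cons L c'' =>
      simp only [List.cons_append, List.cons.injEq] at h2
      exact hρ r m brgs b (by rw [h2.2]; simp) hU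
  · cases a' with
    | nil =>
      simp at h2
      exact h2.1.2.2.2
    | cons L a'' =>
      simp only [List.cons_append, List.cons.injEq] at h2
      refine hg c r m brgs b a'' ?_ hr hd
      rw [h2.1]

open Classical in
/-- A couple for a fed predicate `q` whose tails make fed predicates false cannot exist if no
predicate in the statement `T0` of `p` influences `u`: two paths through `T0` giving different
predicate terms of `q` yield a couple of the same kind with a shorter tail. -/
theorem final_step {S T0 : Schema} (hF : Free S) (hL : Liberal S) (hI : IfPartsCondition S)
    (hPL : PredLinear S) (hO : Occurs T0 S) {u p l0 : ℕ} {args0 : List ℕ}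
    (hP : PStmt T0 p l0 args0) (hN0 : ∀ r, 1 ≤ predCount T0 r → NP S u r) {q : ℕ}
    (hU : UP S u T0 q) :
    ∀ (n : ℕ) (l : ℕ) (args : List ℕ) (γ ρ ρ' : List Letter) (i : HInterp), ρ.length = n →
      FamAt S u q l args γ ρ ρ' i → UFalse S u T0 ρ → UFalse S u T0 ρ' → False := by
  intro n
  induction n using Nat.strong_induction_on with
  | _ n ih =>
  intro l args γ ρ ρ' i₀ hn hfam hρ hρ'
  obtain ⟨α, ν, μ, l', args', b0, rest, hν, hp, hg, ⟨y, hy, w, hw, hyw⟩, hch⟩ := hU.choice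
  obtain ⟨ν₁, hν₁, ν₂, hν₂, hne⟩ := distinguish hF hL hI hPL hO hP hν hp hy
  have hp₁ := link_replace hPL hO hP hν hν₁ hp
  obtain ⟨rfl, rfl, i, hi, hfi, hit⟩ := hfam.transport hF hL hPL
    (γ' := α ++ (ν₁ ++ μ)) (by simpa using hp₁)
  set Y : Bit := (q, args'.map (hx eSt (α ++ (ν₁ ++ μ)))) with hY
  set d₁ := hx eSt (α ++ ν₁) with hd₁
  set d₂ := hx eSt (α ++ ν₂) with hd₂
  have hd12 : ∀ z, ¬ AssignsTo T0 z → d₁ z = d₂ z := by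
    intro z hz
    rw [hd₁, hd₂, hx_append, hx_append, hx_unassigned hν₁ hz, hx_unassigned hν₂ hz]
  have hd21 : ∀ z, ¬ AssignsTo T0 z → d₂ z = d₁ z := fun z hz => (hd12 z hz).symm
  have hYd : Y = (q, args'.map (hx d₁ μ)) := by
    rw [hY, hd₁, ← hx_append, List.append_assoc]
  have hY2 : Y ≠ (q, args'.map (hx d₂ μ)) := by
    rw [hYd]
    intro h
    have h1 := (Prod.ext_iff.1 h).2
    have h2 := List.map_inj_left.1 h1 w hw
    exact hne ((hx_eq_iff _ _ _ _).1 h2 y hyw)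
  have hfst : RunsTo S i (α ++ (ν₁ ++ (μ ++ Letter.prd q l' args' false :: ρ))) := by
    simpa using hfi.fst
  have hrdY : Rd eSt (α ++ (ν₁ ++ (μ ++ Letter.prd q l' args' false :: ρ))) Y
      (α ++ (ν₁ ++ μ)) false := by
    have := rd_intro eSt (α ++ (ν₁ ++ μ)) q l' args' false ρ
    simpa using this
  have hYi : val i Y = false := hfst.val hrdY
  have hff := all_fed_false hν₁ hfst.1 hg hρ
  set C := α ++ (ν₂ ++ (μ ++ Letter.prd q l' args' false :: ρ)) with hC
  have hCp : C ∈ Paths S := link_replace hPL hO hP hν₁ hν₂ hfst.1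
  have hνNP : ∀ {ν'}, ν' ∈ Paths T0 → ∀ {r b}, (∃ m brgs, Letter.prd r m brgs b ∈ ν') →
      NP S u r := by
    rintro ν' h' r b ⟨m, brgs, hm⟩
    exact hN0 _ (predCount_of_mem h' hm)
  -- True terms of fed predicates under `i` are evaluated before `q` on the modified path.
  have star : ∀ x, val i x = true → UP S u T0 x.1 →
      ∃ a, Rd eSt (α ++ (ν₂ ++ μ)) x a true := by
    intro x hx hUx
    have gen : ∀ b ρ₀ a, UFalse S u T0 ρ₀ → x ≠ Y →
        Rd eSt (α ++ (ν₁ ++ (μ ++ Letter.prd q l' args' b :: ρ₀))) x a true →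
        ∃ a, Rd eSt (α ++ (ν₂ ++ μ)) x a true := by
      intro b ρ₀ a h0 hxY h
      rcases rd_three h with h | h | ⟨c, -, h⟩
      · exact ⟨a, rd_append_left h _⟩
      · exact (hUx.1 (hνNP hν₁ h)).elim
      · rcases rd_append h with h | ⟨c', -, h⟩
        · rcases rd_shift hd12 h with h | ⟨m, brgs, κ, e, hv⟩
          · exact ⟨_, rd_three_intro h⟩
          · have := hg _ _ _ _ _ _ e hUx.1 hv
            simp at this
        · rcases rd_prd_cons h with ⟨-, h, -⟩ | ⟨c'', -, h⟩
          · exact (hxY (h.trans hYd.symm)).elim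
          · obtain ⟨m, brgs, hm⟩ := rd_mem h
            have := h0 _ _ _ _ hm hUx
            simp at this
    obtain ⟨hxY, ⟨a, h⟩ | ⟨a, h⟩⟩ := hit x hx
    · exact gen _ _ a hρ hxY (by simpa using h)
    · exact gen _ _ a hρ' hxY (by simpa using h)
  let j : HInterp := fun r s =>
    if NP S u r then decide (∃ a, Rd eSt C (r, s) a true) else i r s
  have hjN : ∀ x : Bit, NP S u x.1 → (val j x = true ↔ ∃ a, Rd eSt C x a true) := by
    intro x hx
    simp only [val, j, hx, if_true, decide_eq_true_eq]
  have hjI : ∀ x : Bit, ¬ NP S u x.1 → val i x = val j x := by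
    intro x hx
    simp only [val, j, hx, if_false]
  have hj : FinSupp j := by
    refine Set.Finite.subset (hi.union (rd_finite eSt C)) ?_
    intro x hx
    by_cases hN : NP S u x.1
    · obtain ⟨a, h⟩ := (hjN x hN).1 hx
      exact Or.inr ⟨a, true, h⟩
    · exact Or.inl ((hjI x hN).trans hx)
  have hjC : RunsTo S j C := by
    refine ⟨hCp, (hAgrees_iff _ _).2 fun x a b h => ?_⟩
    by_cases hN : NP S u x.1
    · cases b with
      | true => exact (hjN x hN).2 ⟨a, h⟩
      | false =>
        by_contra hc
        obtain ⟨a', h'⟩ := (hjN x hN).1 (by simpa using hc)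
        have := (read_once hF hCp h h').2
        simp at this
    · rw [← hjI x hN]
      rcases rd_three h with h' | h' | ⟨c, -, h'⟩
      · exact hfst.val (rd_append_left h' _)
      · exact (hN (hνNP hν₂ h')).elim
      · rcases rd_shift hd21 h' with h' | ⟨m, brgs, κ, e, hv⟩
        · exact hfst.val (rd_three_intro h')
        · have hb := hff _ c _ _ _ _ _ rfl e hN hv
          subst hb
          by_contra hc
          rw [Bool.not_eq_false] at hc
          have hUx : UP S u T0 x.1 := by
            refine ⟨hN, α, ν₁, c, m, brgs, false, κ, hν₁, e ▸ hfst.1, ?_, hv⟩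
            rintro a' r' m' brgs' b' ρ'' rfl hr' hd'
            exact hff _ a' r' m' brgs' b' _ rfl (e.trans (List.append_assoc _ _ _)) hr' hd'
          obtain ⟨a', h''⟩ := star x hc hUx
          have h3 := rd_append_left h'' (Letter.prd q l' args' false :: ρ)
          have h4 : Rd eSt C x a' true := by rw [hC]; simpa using h3
          have := (read_once hF hCp h h4).2
          simp at this
  have hqN : ¬ NP S u q := hU.1
  have ho1 := outv_congr hF hi.finT hj.finT hjI
  have ho2 : outv S u (flp i Y) = outv S u (flp j Y) := by
    refine outv_congr hF (hi.flp Y).finT (hj.flp Y).finT fun x hx => ?_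
    by_cases h : x = Y
    · rw [h, val_flp_self, val_flp_self, hjI _ hqN]
    · rw [val_flp_ne _ h, val_flp_ne _ h, hjI _ hx]
  have hs : outv S u (flp j Y) ≠ outv S u j := by
    rw [← ho1, ← ho2, outv, outv, hfi.fst.run_eq, hfi.snd.run_eq, hexec_eq_hx, hexec_eq_hx]
    exact hfi.diff.symm
  have hjY : val j Y = false := by rw [← hjI Y hqN]; exact hYi
  have hR' := run_spec hF (S := S) (hj.flp Y).finT
  obtain ⟨γ₂, l₂, args₂, κ, κ', e1, e2, e3⟩ := sens_read hF hj.finT hs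
  have eC := hjC.run_eq.symm.trans e1
  rw [hjY] at e1 e2 eC
  have hrd2 : Rd eSt C Y γ₂ false := ⟨l₂, args₂, κ, eC, e3⟩
  have hrd2' : Rd eSt (run S (flp j Y)) Y γ₂ true := ⟨l₂, args₂, κ', e2, e3⟩
  have hloc : ∃ c₂, γ₂ = α ++ (ν₂ ++ (μ ++ Letter.prd q l' args' false :: c₂)) := by
    rcases rd_three hrd2 with h | h | ⟨c, rfl, h⟩
    · have h1 := (read_once hF hfst.1 (rd_append_left h _) hrdY).1
      have h2 := rd_lt h
      rw [h1] at h2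
      simp at h2
    · exact (hqN (hνNP hν₂ h)).elim
    · rcases rd_append h with h | ⟨c', rfl, h0⟩
      · exfalso
        rcases rd_shift hd21 h with h' | ⟨m, brgs, κ₁, e, hv⟩
        · have h1 := rd_three_intro (rd_append_left h' (Letter.prd q l' args' false :: ρ))
          have h2 := (read_once hF hfst.1 h1 hrdY).1
          have h3 := rd_lt h
          simp only [List.append_cancel_left_eq] at h2
          rw [h2] at h3
          simp at h3
        · exact hch _ _ _ _ _ e hv
      · rcases rd_prd_cons h0 with ⟨-, h1, -⟩ | ⟨c'', rfl, -⟩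
        · exact (hY2 h1).elim
        · exact ⟨c'', rfl⟩
  obtain ⟨c₂, hγ₂⟩ := hloc
  have hρeq : ρ = c₂ ++ Letter.prd Y.1 l₂ args₂ false :: κ := by
    rw [hC, hγ₂] at eC
    simpa using eC
  refine ih κ.length ?_ l₂ args₂ γ₂ κ κ' j rfl ⟨?_, ?_, ?_⟩ ?_ ?_
  · rw [← hn, hρeq]
    simp
    omega
  · exact eC ▸ hjC
  · have : ((q, args₂.map (hx eSt γ₂)) : Bit) = Y := Prod.ext rfl e3.symm
    rw [this]
    exact e2 ▸ hR'
  · intro h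
    apply hs
    rw [outv, outv, hexec_eq_hx, hexec_eq_hx, e1, e2]
    exact h.symm
  · intro r m brgs b hm hr
    exact hρ r m brgs b (by rw [hρeq]; simp [hm]) hr
  · intro r m brgs b hm hr
    by_contra hb
    rw [Bool.not_eq_false] at hb
    subst hb
    obtain ⟨c, hc⟩ := read_of_mem (d := hx eSt (γ₂ ++ [Letter.prd Y.1 l₂ args₂ true])) hm
    have hc := rd_append_right hc
    rw [List.append_assoc, List.singleton_append] at hc
    simp only [Bool.not_false] at e2
    rw [← e2] at hc
    have hv := hR'.val hc
    rw [val_flp_ne] at hv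
    · rw [← hjI _ hr.1] at hv
      obtain ⟨a', h'⟩ := star _ hv hr
      have h2 := rd_append_left h' (Letter.prd q l' args' false :: c₂ ++
        Letter.prd Y.1 l₂ args₂ true :: κ')
      have h3 := rd_lt h'
      have hrun : run S (flp j Y) = α ++ (ν₂ ++ μ) ++ (Letter.prd q l' args' false :: c₂ ++
          Letter.prd Y.1 l₂ args₂ true :: κ') := by
        rw [e2, hγ₂]
        simp
      rw [← hrun] at h2
      have h4 := (read_once hF hR'.1 hc h2).1
      rw [← h4, hγ₂] at h3
      simp at h3
    · intro hx
      rw [hx] at hc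
      have := (read_once hF hR'.1 hc hrd2').1
      simp at this

/-! ### Links, and propagation of couples -/

theorem PLink.mem {S T0 : Schema} (hPL : PredLinear S) (hO : Occurs T0 S) {p l : ℕ}
    {args : List ℕ} (hP : PStmt T0 p l args) {X ν} (h : PLink S p X ν) : ν ∈ Paths T0 := by
  obtain ⟨K, hK⟩ := hO.cont
  rcases h with ⟨l', args', t, e, hO', π, hπ, rfl⟩ | ⟨l', args', b, hO', h⟩
  · obtain ⟨K', hK'⟩ := hO'.cont
    obtain ⟨rfl, -⟩ := cont_unique hK (hPL p) hP hK' ⟨rfl, rfl, rfl⟩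
    cases X with
    | true => exact Or.inl ⟨π, by simpa using hπ, rfl⟩
    | false => exact Or.inr ⟨π, by simpa using hπ, rfl⟩
  · obtain ⟨K', hK'⟩ := hO'.cont
    obtain ⟨rfl, -⟩ := cont_unique hK (hPL p) hP hK' ⟨rfl, rfl, rfl⟩
    rcases h with ⟨-, rfl⟩ | ⟨-, π, hπ, ρ, hρ, rfl⟩
    · exact while_false_mem _ _ _ _
    · exact while_true_mem hπ hρ

theorem AssignInPart.exists_stmt {S : Schema} {p v : ℕ} (h : AssignInPart S p v) :
    ∃ T0 l args, Occurs T0 S ∧ PStmt T0 p l args ∧ AssignsTo T0 v := by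
  rcases h with ⟨l, args, t, e, hO, hv⟩ | ⟨l, args, b, hO, hv⟩
  · exact ⟨_, l, args, hO, ⟨rfl, rfl, rfl⟩, hv⟩
  · exact ⟨_, l, args, hO, ⟨rfl, rfl, rfl⟩, hv⟩

/-- Lemma 24 / pred.to.pred.lem: let S be a special schema with
a qu-couple; if there is an assignment to v in the body or in one part of p
and a path-segment of S v-feeding p to q, then there is a pu-couple for S. -/
theorem couple_propagates_along_feed (S : Schema) (hS : Special S)
    (u v p q : ℕ)
    (hq : ∃ i j : HInterp, PUCouple S q u i j)
    (hv : AssignInPart S p v)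
    (hf : ∃ μ, VFeeds S v p q μ) :
    ∃ i j : HInterp, PUCouple S p u i j := by
  obtain ⟨-, hPL, hF, hL, hI⟩ := hS
  by_contra hcon
  have hp : NP S u p := by
    intro i hi s
    by_contra hne
    exact hcon ⟨i, flp i (p, s), s, ptcouple_flp i (p, s), run S i, run S (flp i (p, s)),
      run_spec hF hi, run_spec hF (hi.flp _), fun h => hne h.symm⟩
  have hqN : ¬ NP S u q := by
    intro hN
    obtain ⟨i, j, ts, hc, σ, τ, hσ, hτ, hne⟩ := hq
    rw [hc.eq_flp] at hτ
    obtain ⟨i', hi', h⟩ := restrict_couple (S := S) hσ hτ hne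
    exact h (hN i' hi'.finT ts)
  obtain ⟨T0, l0, args0, hO, hP, hv0⟩ := hv.exists_stmt
  obtain ⟨μ, X, ν, hlink, m, args, ⟨a, b, hpath⟩, w, hw, F, hF'⟩ := hf
  have hν := PLink.mem hPL hO hP hlink
  have hN0 : ∀ r, 1 ≤ predCount T0 r → NP S u r := fun r hr => np_of_stmt hF hPL hO hP hp hr
  obtain ⟨r, hr⟩ := exists_UP (S := S) (u := u) (α := a) hν _ μ q m args true b rfl
    (by simpa using hpath) hqN ⟨v, hv0, w, hw, F, hF'⟩
  obtain ⟨i, s, hi, hs⟩ := exists_finSupp_of_not_NP hF hr.1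
  obtain ⟨c, l, brgs, ρ, ρ', e1, -, e3⟩ := sens_read hF hi.finT hs
  obtain ⟨q', l', args', γ, κ, κ', i', hU, hfam, h1, h2⟩ :=
    descent hF _ i c (r, s) _ hi rfl hr hs ⟨l, brgs, ρ, e1, e3⟩
  exact final_step hF hL hI hPL hO hP hN0 hU _ l' args' γ κ κ' i' rfl hfam h1 h2

end SchemaSlicing
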